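/- arXiv:2305.19701 — 2 statements merged into one kernel-verified Lean document; each statement's English description precedes it below -/
import Mathlib

section
/- Let D be a strictly convex planar domain whose boundary is parametrized by a smooth ℓ-periodic curve γ: ℝ → ℝ², injective on [0,ℓ), positively oriented, with ω(γ'(t),γ''(t)) > 0 for all t. If the symplectic billiard in D has no conjugate points, then ∫∫_P [L₁₁(t₁,t₂) + 2L₁₂(t₁,t₂) + L₂₂(t₁,t₂)] · L₁₂(t₁,t₂) dt₁ dt₂ ≤ 0, where P = {(t₁,t₂) ∈ [0,ℓ]² : ω(γ'(t₁),γ'(t₂)) > 0}. -/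
open Set MeasureTheory

/-- The standard area form on ℝ². -/
noncomputable def om (u v : ℝ × ℝ) : ℝ := u.1 * v.2 - v.1 * u.2

/-- L₁₁(t₁,t₂) = ω(γ''(t₁), γ(t₂)). -/
noncomputable def L11 (γ : ℝ → ℝ × ℝ) (t₁ t₂ : ℝ) : ℝ := om (deriv (deriv γ) t₁) (γ t₂)

/-- L₂₂(t₁,t₂) = ω(γ(t₁), γ''(t₂)). -/
noncomputable def L22 (γ : ℝ → ℝ × ℝ) (t₁ t₂ : ℝ) : ℝ := om (γ t₁) (deriv (deriv γ) t₂)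

/-- L₁₂(t₁,t₂) = ω(γ'(t₁), γ'(t₂)). -/
noncomputable def L12 (γ : ℝ → ℝ × ℝ) (t₁ t₂ : ℝ) : ℝ := om (deriv γ t₁) (deriv γ t₂)

/-- A symplectic billiard configuration: the phase-space condition and the reflection law. -/
def IsConfiguration (γ : ℝ → ℝ × ℝ) (t : ℤ → ℝ) : Prop :=
  (∀ n : ℤ, 0 < om (deriv γ (t n)) (deriv γ (t (n + 1)))) ∧
  (∀ n : ℤ, om (deriv γ (t n)) (γ (t (n + 1)) - γ (t (n - 1))) = 0)

/-- A Jacobi field along a configuration. -/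
def IsJacobiField (γ : ℝ → ℝ × ℝ) (t : ℤ → ℝ) (ξ : ℤ → ℝ) : Prop :=
  ∀ n : ℤ, L12 γ (t (n - 1)) (t n) * ξ (n - 1)
    + (L22 γ (t (n - 1)) (t n) + L11 γ (t n) (t (n + 1))) * ξ n
    + L12 γ (t n) (t (n + 1)) * ξ (n + 1) = 0


/-- A locally convex arc turning by `2π` ending ahead of its start on the initial tangent line
has a self-intersection. -/
lemma spiral_arc (X Y ρ : ℝ → ℝ) (hρ : ∀ x, 0 < ρ x)
    (hX : ∀ x, HasDerivAt X (ρ x * Real.cos x) x)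
    (hY : ∀ x, HasDerivAt Y (ρ x * Real.sin x) x)
    (hY0 : Y 0 = Y (2 * Real.pi)) (hX0 : X 0 < X (2 * Real.pi)) :
    ∃ x y, 0 ≤ x ∧ x < Real.pi ∧ Real.pi ≤ y ∧ y ≤ 2 * Real.pi ∧ x < y ∧ X x = X y ∧ Y x = Y y ∧
      (y < 2 * Real.pi ∨ 0 < x) := by
  have hpi := Real.pi_pos
  have cX : Continuous X := continuous_iff_continuousAt.2 fun x => (hX x).continuousAt
  have cY : Continuous Y := continuous_iff_continuousAt.2 fun x => (hY x).continuousAt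
  have mY : StrictMonoOn Y (Icc 0 Real.pi) := by
    apply strictMonoOn_of_deriv_pos (convex_Icc _ _) cY.continuousOn
    intro x hx
    rw [interior_Icc] at hx
    rw [(hY x).deriv]
    exact mul_pos (hρ x) (Real.sin_pos_of_pos_of_lt_pi hx.1 hx.2)
  have aY : StrictAntiOn Y (Icc Real.pi (2 * Real.pi)) := by
    apply strictAntiOn_of_deriv_neg (convex_Icc _ _) cY.continuousOn
    intro x hx
    rw [interior_Icc] at hx
    rw [(hY x).deriv]
    have := Real.sin_pos_of_pos_of_lt_pi (x := x - Real.pi) (by linarith [hx.1]) (by linarith [hx.2])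
    rw [Real.sin_sub_pi] at this
    nlinarith [hρ x]
  have aX : StrictAntiOn X (Icc (Real.pi / 2) (3 * Real.pi / 2)) := by
    apply strictAntiOn_of_deriv_neg (convex_Icc _ _) cX.continuousOn
    intro x hx
    rw [interior_Icc] at hx
    rw [(hX x).deriv]
    have := Real.cos_neg_of_pi_div_two_lt_of_lt (x := x) (by linarith [hx.1]) (by linarith [hx.2])
    nlinarith [hρ x]
  -- existence of partners
  have ex : ∀ x ∈ Icc 0 Real.pi, ∃ y ∈ Icc Real.pi (2 * Real.pi), Y y = Y x := by
    intro x hx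
    have h := intermediate_value_Icc' (f := Y) (by linarith : Real.pi ≤ 2 * Real.pi) cY.continuousOn
    have : Y x ∈ Icc (Y (2 * Real.pi)) (Y Real.pi) := by
      rw [← hY0]
      exact ⟨mY.monotoneOn ⟨le_rfl, hpi.le⟩ hx hx.1, mY.monotoneOn hx ⟨hpi.le, le_rfl⟩ hx.2⟩
    obtain ⟨y, hy, e⟩ := h this
    exact ⟨y, hy, e⟩
  have ex' : ∀ y ∈ Icc Real.pi (2 * Real.pi), ∃ x ∈ Icc 0 Real.pi, Y y = Y x := by
    intro y hy
    have h := intermediate_value_Icc (f := Y) hpi.le cY.continuousOn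
    have : Y y ∈ Icc (Y 0) (Y Real.pi) := by
      rw [hY0]
      exact ⟨aY.antitoneOn hy ⟨by linarith, le_rfl⟩ hy.2, aY.antitoneOn ⟨le_rfl, by linarith⟩ hy hy.1⟩
    obtain ⟨x, hx, e⟩ := h this
    exact ⟨x, hx, e.symm⟩
  -- a point where the left branch is to the left
  obtain ⟨xs, hxs, ys, hys, hY1, hX1⟩ : ∃ xs ∈ Ico 0 Real.pi, ∃ ys ∈ Icc Real.pi (2 * Real.pi),
      Y ys = Y xs ∧ X ys ≤ X xs := by
    obtain ⟨y, hy, e⟩ := ex (Real.pi / 2) ⟨by linarith, by linarith⟩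
    rcases le_total y (3 * Real.pi / 2) with h | h
    · exact ⟨Real.pi / 2, ⟨by linarith, by linarith⟩, y, hy, e,
        aX.antitoneOn ⟨le_rfl, by linarith⟩ ⟨by linarith [hy.1], h⟩ (by linarith [hy.1])⟩
    · obtain ⟨x, hx, e'⟩ := ex' (3 * Real.pi / 2) ⟨by linarith, by linarith⟩
      have h1 : Real.pi / 2 ≤ x := by
        have : Y (Real.pi / 2) ≤ Y x := by
          rw [← e, ← e']
          exact aY.antitoneOn ⟨by linarith, by linarith⟩ hy h
        exact (mY.le_iff_le ⟨by linarith, by linarith⟩ hx).1 this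
      have h2 : x < Real.pi := by
        refine lt_of_le_of_ne hx.2 ?_
        rintro rfl
        have := aY (a := Real.pi) (b := 3 * Real.pi / 2) ⟨le_rfl, by linarith⟩ ⟨by linarith, by linarith⟩ (by linarith)
        linarith
      exact ⟨x, ⟨hx.1, h2⟩, _, ⟨by linarith, by linarith⟩, e',
        aX.antitoneOn ⟨h1, by linarith⟩ ⟨by linarith, le_rfl⟩ (by linarith)⟩
  -- closed sets
  have clos : ∀ g : ℝ × ℝ → ℝ, Continuous g →
      IsClosed (Prod.fst '' {p : ℝ × ℝ | p ∈ Icc 0 Real.pi ×ˢ Icc Real.pi (2 * Real.pi) ∧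
        Y p.2 = Y p.1 ∧ 0 ≤ g p}) := by
    intro g hg
    have hc : IsCompact {p : ℝ × ℝ | p ∈ Icc 0 Real.pi ×ˢ Icc Real.pi (2 * Real.pi) ∧
        Y p.2 = Y p.1 ∧ 0 ≤ g p} := by
      apply IsCompact.inter_right (isCompact_Icc.prod isCompact_Icc)
      apply IsClosed.inter
      · exact isClosed_eq (by fun_prop) (by fun_prop)
      · exact isClosed_le (by fun_prop) hg
    exact (hc.image continuous_fst).isClosed
  have c1 := clos (fun p => X p.2 - X p.1) (by fun_prop)
  have c2 := clos (fun p => X p.1 - X p.2) (by fun_prop)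
  have conn := (isPreconnected_closed_iff.1 (isPreconnected_Icc (a := (0:ℝ)) (b := xs))) _ _ c1 c2
    (by
      intro x hx
      have hx' : x ∈ Icc 0 Real.pi := ⟨hx.1, by linarith [hx.2, hxs.2]⟩
      obtain ⟨y, hy, e⟩ := ex x hx'
      rcases le_total (X x) (X y) with h | h
      · left; exact ⟨(x, y), ⟨⟨hx', hy⟩, e, by simpa using h⟩, rfl⟩
      · right; exact ⟨(x, y), ⟨⟨hx', hy⟩, e, by simpa using h⟩, rfl⟩)
    ⟨0, ⟨le_rfl, hxs.1⟩, (0, 2 * Real.pi), ⟨⟨⟨le_rfl, hpi.le⟩, ⟨by simp; linarith, le_rfl⟩⟩, hY0.symm,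
      by simpa using hX0.le⟩, rfl⟩
    ⟨xs, ⟨hxs.1, le_rfl⟩, (xs, ys), ⟨⟨⟨hxs.1, hxs.2.le⟩, hys⟩, hY1, by simpa using hX1⟩, rfl⟩
  obtain ⟨x, hx, ⟨⟨x1, y1⟩, ⟨⟨h1, h2⟩, h3, h4⟩, rfl⟩, ⟨⟨x2, y2⟩, ⟨⟨h5, h6⟩, h7, h8⟩, h9⟩⟩ := conn
  simp only at h1 h2 h3 h4 h5 h6 h7 h8 h9 hx
  subst h9
  have : y1 = y2 := aY.injOn h2 h6 (by rw [h3, h7])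
  subst this
  have hXe : X x2 = X y1 := by linarith
  refine ⟨x2, y1, hx.1, by linarith [hx.2, hxs.2], h2.1, h2.2, by linarith [hx.2, hxs.2, h2.1], hXe, h3.symm, ?_⟩
  by_contra hcon
  push Not at hcon
  have e1 : x2 = 0 := le_antisymm hcon.2 hx.1
  have e2 : y1 = 2 * Real.pi := le_antisymm h2.2 hcon.1
  rw [e1, e2] at hXe
  linarith

/-- A simple closed locally convex curve cannot turn more than once. -/
lemma no_multi_turn (X Y ρ : ℝ → ℝ) (hρ : ∀ x, 0 < ρ x)
    (hX : ∀ x, HasDerivAt X (ρ x * Real.cos x) x)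
    (hY : ∀ x, HasDerivAt Y (ρ x * Real.sin x) x)
    (k : ℕ) (hk : 2 ≤ k)
    (pX : ∀ x, X (x + k * (2 * Real.pi)) = X x) (pY : ∀ x, Y (x + k * (2 * Real.pi)) = Y x)
    (hinj : ∀ x d, 0 < d → d < k * (2 * Real.pi) → X (x + d) = X x → Y (x + d) = Y x → False) :
    False := by
  have hpi := Real.pi_pos
  have hk' : (2 : ℝ) ≤ k := by exact_mod_cast hk
  have hk2 : 2 * Real.pi < k * (2 * Real.pi) := by nlinarith
  set D : ℝ → ℝ := fun a => Real.cos a * (Y (a + 2 * Real.pi) - Y a)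
    - Real.sin a * (X (a + 2 * Real.pi) - X a) with hD
  set E : ℝ → ℝ := fun a => Real.cos a * (X (a + 2 * Real.pi) - X a)
    + Real.sin a * (Y (a + 2 * Real.pi) - Y a) with hE
  have hDd : ∀ a, HasDerivAt D (- E a) a := by
    intro a
    have hXs : HasDerivAt (fun a => X (a + 2 * Real.pi)) (ρ (a + 2 * Real.pi) * Real.cos a) a := by
      have := (hX (a + 2 * Real.pi)).comp_add_const a (2 * Real.pi)
      rwa [Real.cos_add_two_pi] at this
    have hYs : HasDerivAt (fun a => Y (a + 2 * Real.pi)) (ρ (a + 2 * Real.pi) * Real.sin a) a := by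
      have := (hY (a + 2 * Real.pi)).comp_add_const a (2 * Real.pi)
      rwa [Real.sin_add_two_pi] at this
    have := ((Real.hasDerivAt_cos a).mul (hYs.sub (hY a))).sub
      ((Real.hasDerivAt_sin a).mul (hXs.sub (hX a)))
    refine this.congr_deriv ?_
    simp only [hE, Pi.sub_apply]; ring
  have cD : Continuous D := continuous_iff_continuousAt.2 fun x => (hDd x).continuousAt
  -- zeros of `D` are transversal
  have hDE : ∀ a, D a = 0 → E a ≠ 0 := by
    intro a h1 h2
    have hcs := Real.sin_sq_add_cos_sq a
    simp only [hD, hE] at h1 h2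
    refine hinj a (2 * Real.pi) (by positivity) hk2 ?_ ?_
    · have : X (a + 2 * Real.pi) - X a = 0 := by
        linear_combination Real.cos a * h2 - Real.sin a * h1 - (X (a + 2 * Real.pi) - X a) * hcs
      linarith
    · have : Y (a + 2 * Real.pi) - Y a = 0 := by
        linear_combination Real.sin a * h2 + Real.cos a * h1 - (Y (a + 2 * Real.pi) - Y a) * hcs
      linarith
  have hsum : ∀ a, ∑ j ∈ Finset.range k, D (a + j * (2 * Real.pi)) = 0 := by
    intro a
    have h1 : ∀ j ∈ Finset.range k, D (a + j * (2 * Real.pi)) =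
        (Real.cos a * Y (a + (j + 1 : ℕ) * (2 * Real.pi)) - Real.sin a * X (a + (j + 1 : ℕ) * (2 * Real.pi)))
        - (Real.cos a * Y (a + (j : ℕ) * (2 * Real.pi)) - Real.sin a * X (a + (j : ℕ) * (2 * Real.pi))) := by
      intro j _
      simp only [hD, Real.cos_add_nat_mul_two_pi, Real.sin_add_nat_mul_two_pi]
      have : a + j * (2 * Real.pi) + 2 * Real.pi = a + (j + 1 : ℕ) * (2 * Real.pi) := by
        push_cast; ring
      rw [this]; ring
    rw [Finset.sum_congr rfl h1,
      Finset.sum_range_sub (fun j : ℕ => Real.cos a * Y (a + (j : ℕ) * (2 * Real.pi)) - Real.sin a * X (a + (j : ℕ) * (2 * Real.pi)))]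
    simp [pX, pY]
  have pD : ∀ a, D (a + k * (2 * Real.pi)) = D a := by
    intro a
    simp only [hD, Real.cos_add_nat_mul_two_pi, Real.sin_add_nat_mul_two_pi, pX, pY]
    rw [show a + k * (2 * Real.pi) + 2 * Real.pi = a + 2 * Real.pi + k * (2 * Real.pi) by ring, pX, pY]
  obtain ⟨a0, ha0⟩ : ∃ a, D a ≠ 0 := by
    by_contra! h
    have h0 : D = fun _ => 0 := funext h
    have := hDd 0
    rw [h0] at this
    have := this.unique (hasDerivAt_const 0 0)
    exact hDE 0 (h 0) (by linarith)
  have key : ∃ ap an, 0 < D ap ∧ D an < 0 := by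
    have hex : ∃ i ∈ Finset.range k, D (a0 + i * (2 * Real.pi)) ≠ 0 :=
      ⟨0, by simp; omega, by simpa using ha0⟩
    obtain ⟨i, _, hi⟩ := Finset.exists_pos_of_sum_zero_of_exists_nonzero _ (hsum a0) hex
    obtain ⟨j, _, hj⟩ := Finset.exists_pos_of_sum_zero_of_exists_nonzero
      (fun j : ℕ => - D (a0 + j * (2 * Real.pi))) (s := Finset.range k)
      (by rw [Finset.sum_neg_distrib, hsum a0, neg_zero])
      (by obtain ⟨i, h, h'⟩ := hex; exact ⟨i, h, neg_ne_zero.2 h'⟩)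
    exact ⟨_, _, hi, by simpa using hj⟩
  obtain ⟨ap, an', hap, han'⟩ := key
  obtain ⟨an, hlt, han⟩ : ∃ an, ap < an ∧ D an < 0 := by
    have hper : Function.Periodic D (k * (2 * Real.pi)) := pD
    obtain ⟨n, hn⟩ := exists_nat_gt ((ap - an') / (k * (2 * Real.pi)))
    refine ⟨an' + n * (k * (2 * Real.pi)), ?_, ?_⟩
    · rw [div_lt_iff₀ (by positivity)] at hn
      linarith
    · rw [hper.nat_mul n an']; exact han'
  obtain ⟨z, hz0, hzE⟩ : ∃ z, D z = 0 ∧ 0 < E z := by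
    have hcomp : IsCompact (Icc ap an ∩ {x | 0 ≤ D x}) :=
      isCompact_Icc.inter_right (isClosed_le continuous_const cD)
    obtain ⟨z, ⟨hz, hzD⟩, hmax⟩ := hcomp.exists_isMaxOn ⟨ap, ⟨le_rfl, hlt.le⟩, hap.le⟩
      (continuous_id.continuousOn)
    have hzlt : z < an := by
      refine lt_of_le_of_ne hz.2 ?_
      rintro rfl
      simp only [mem_ofPred_eq] at hzD
      linarith
    have hafter : ∀ x ∈ Ioc z an, D x < 0 := by
      intro x hx
      by_contra! hcon
      have := hmax (a := x) ⟨⟨by linarith [hz.1, hx.1], hx.2⟩, hcon⟩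
      simp only [id, mem_ofPred_eq] at this
      linarith [hx.1]
    have hmem : Ioc z an ∈ nhdsWithin z (Ioi z) := Ioc_mem_nhdsGT hzlt
    have hle : D z ≤ 0 := by
      refine le_of_tendsto (cD.continuousWithinAt (s := Ioi z) (x := z)).tendsto ?_
      filter_upwards [hmem] with x hx using (hafter x hx).le
    have hz0 : D z = 0 := le_antisymm hle hzD
    refine ⟨z, hz0, ?_⟩
    have hslope := (hasDerivAt_iff_tendsto_slope.1 (hDd z)).mono_left
      (nhdsWithin_mono z (fun x (hx : x ∈ Ioi z) => ne_of_gt hx))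
    have : - E z ≤ 0 := by
      refine le_of_tendsto hslope ?_
      filter_upwards [hmem] with x hx
      rw [slope_def_field, hz0, sub_zero]
      exact div_nonpos_of_nonpos_of_nonneg (hafter x hx).le (by linarith [hx.1])
    exact lt_of_le_of_ne (by linarith) (hDE z hz0).symm
  -- the rotated curve
  set c := Real.cos z
  set s := Real.sin z
  have hcs : s ^ 2 + c ^ 2 = 1 := Real.sin_sq_add_cos_sq z
  have hXs : ∀ x, HasDerivAt (fun x => X (z + x)) (ρ (z + x) * Real.cos (z + x)) x := fun x =>
    (hX (z + x)).comp_const_add z x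
  have hYs : ∀ x, HasDerivAt (fun x => Y (z + x)) (ρ (z + x) * Real.sin (z + x)) x := fun x =>
    (hY (z + x)).comp_const_add z x
  obtain ⟨x, y, h1, h2, h3, h4, h5, h6, h7, h8⟩ := spiral_arc
    (fun x => c * X (z + x) + s * Y (z + x)) (fun x => c * Y (z + x) - s * X (z + x))
    (fun x => ρ (z + x)) (fun x => hρ _)
    (by
      intro x
      refine (((hXs x).const_mul c).add ((hYs x).const_mul s)).congr_deriv ?_
      rw [Real.cos_add, Real.sin_add]
      linear_combination ((ρ (z + x) * Real.cos x)) * hcs)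
    (by
      intro x
      refine (((hYs x).const_mul c).sub ((hXs x).const_mul s)).congr_deriv ?_
      rw [Real.cos_add, Real.sin_add]
      linear_combination ((ρ (z + x) * Real.sin x)) * hcs)
    (by simp only [hD, add_zero] at hz0 ⊢; linarith)
    (by simp only [hE, add_zero] at hzE ⊢; linarith)
  refine hinj (z + x) (y - x) (by linarith) (by linarith) ?_ ?_
  · rw [show z + x + (y - x) = z + y by ring]
    linear_combination (-c) * h6 + s * h7 - (X (z + y) - X (z + x)) * hcs
  · rw [show z + x + (y - x) = z + y by ring]
    linear_combination (-s) * h6 - c * h7 - (Y (z + y) - Y (z + x)) * hcs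

lemma exists_angle (ℓ : ℝ) (γ : ℝ → ℝ × ℝ)
    (hsmooth : ContDiff ℝ (⊤ : ℕ∞) γ)
    (hper : ∀ t, γ (t + ℓ) = γ t)
    (hcurv : ∀ t, 0 < om (deriv γ t) (deriv (deriv γ) t)) :
    ∃ Θ Θ' r : ℝ → ℝ, (∀ t, 0 < r t) ∧
      (∀ t, deriv γ t = (r t * Real.cos (Θ t), r t * Real.sin (Θ t))) ∧
      (∀ t, HasDerivAt Θ (Θ' t) t) ∧ (∀ t, 0 < Θ' t) ∧ ∃ C, ∀ t, Θ (t + ℓ) = Θ t + C := by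
  have hv : ContDiff ℝ (⊤ : ℕ∞) (deriv γ) := (contDiff_infty_iff_deriv.1 hsmooth).2
  have hk : ContDiff ℝ (⊤ : ℕ∞) (deriv (deriv γ)) := (contDiff_infty_iff_deriv.1 hv).2
  have pv : ∀ t, deriv γ (t + ℓ) = deriv γ t := by
    intro t
    rw [← deriv_comp_add_const]
    congr 1; funext x; exact hper x
  have pk : ∀ t, deriv (deriv γ) (t + ℓ) = deriv (deriv γ) t := by
    intro t
    rw [← deriv_comp_add_const]
    congr 1; funext x; exact pv x
  have hvd : ∀ t, HasDerivAt (deriv γ) (deriv (deriv γ) t) t := fun t =>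
    (hv.differentiable (by simp) t).hasDerivAt
  set z : ℝ → ℂ := fun t => ((deriv γ t).1 : ℂ) + ((deriv γ t).2 : ℂ) * Complex.I with hz
  set z' : ℝ → ℂ := fun t => ((deriv (deriv γ) t).1 : ℂ) + ((deriv (deriv γ) t).2 : ℂ) * Complex.I
    with hz'
  have hzd : ∀ t, HasDerivAt z (z' t) t := by
    intro t
    have h1 : HasDerivAt (fun t => (deriv γ t).1) (deriv (deriv γ) t).1 t := (hvd t).fst
    have h2 : HasDerivAt (fun t => (deriv γ t).2) (deriv (deriv γ) t).2 t := (hvd t).snd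
    exact h1.ofReal_comp.add (h2.ofReal_comp.mul_const Complex.I)
  have hz0 : ∀ t, z t ≠ 0 := by
    intro t h
    have h1 := congrArg Complex.re h
    have h2 := congrArg Complex.im h
    simp [hz] at h1 h2
    have := hcurv t
    simp [om, h1, h2] at this
  have cz : Continuous z := continuous_iff_continuousAt.2 fun t => (hzd t).continuousAt
  have cz' : Continuous z' := by
    have := hk.continuous
    simp only [hz']; fun_prop
  have cg : Continuous (fun t => z' t / z t) := cz'.div cz hz0
  set L : ℝ → ℂ := fun t => Complex.log (z 0) + ∫ s in (0:ℝ)..t, z' s / z s with hL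
  have hLd : ∀ t, HasDerivAt L (z' t / z t) t := by
    intro t
    exact ((cg.integral_hasStrictDerivAt 0 t).hasDerivAt).const_add _
  have hexp : ∀ t, z t = Complex.exp (L t) := by
    have hq : ∀ t, HasDerivAt (fun t => z t * Complex.exp (- L t)) 0 t := by
      intro t
      refine ((hzd t).mul ((hLd t).neg.cexp)).congr_deriv ?_
      field_simp [hz0 t]
      ring
    intro t
    have h1 := is_const_of_deriv_eq_zero (fun t => (hq t).differentiableAt) (fun t => (hq t).deriv) t 0
    have h2 : L 0 = Complex.log (z 0) := by simp [hL]
    rw [h2, Complex.exp_neg, Complex.exp_neg, Complex.exp_log (hz0 0), mul_inv_cancel₀ (hz0 0)] at h1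
    field_simp at h1
    exact h1
  have hΘd : ∀ t, HasDerivAt (fun t => (L t).im) (z' t / z t).im t := by
    intro t
    have := (Complex.imCLM.hasFDerivAt.comp_hasDerivAt t (hLd t))
    exact this
  refine ⟨fun t => (L t).im, fun t => (z' t / z t).im, fun t => Real.exp (L t).re,
    fun t => Real.exp_pos _, ?_, hΘd, ?_, ?_⟩
  · intro t
    have h1 := congrArg Complex.re (hexp t)
    have h2 := congrArg Complex.im (hexp t)
    rw [Complex.exp_re] at h1
    rw [Complex.exp_im] at h2
    simp [hz] at h1 h2
    exact Prod.ext h1 h2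
  · intro t
    have hc := hcurv t
    have hn : 0 < Complex.normSq (z t) := Complex.normSq_pos.2 (hz0 t)
    show 0 < (z' t / z t).im
    rw [Complex.div_im]
    simp only [om] at hc
    rw [← sub_div]
    apply div_pos _ hn
    simp [hz, hz']
    linarith
  · refine ⟨(L (0 + ℓ)).im - (L 0).im, fun t => ?_⟩
    have hq : ∀ t, HasDerivAt (fun t => (L (t + ℓ)).im - (L t).im) 0 t := by
      intro t
      refine (((hΘd (t + ℓ)).comp_add_const t ℓ).sub (hΘd t)).congr_deriv ?_
      simp only [hz, hz', pv, pk, sub_self]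
    have h1 := is_const_of_deriv_eq_zero (fun t => (hq t).differentiableAt) (fun t => (hq t).deriv) t 0
    simp only at h1 ⊢
    linarith

lemma simple_of_inj (ℓ : ℝ) (hℓ : 0 < ℓ) (γ : ℝ → ℝ × ℝ) (hper : ∀ t, γ (t + ℓ) = γ t)
    (hinj : InjOn γ (Ico 0 ℓ)) (s t : ℝ) (h1 : s < t) (h2 : t < s + ℓ) (h : γ s = γ t) : False := by
  have hp : Function.Periodic γ ℓ := hper
  obtain ⟨n, hn, -⟩ := existsUnique_add_zsmul_mem_Ico hℓ s 0
  have e1 : γ (s + n • ℓ) = γ s := hp.zsmul n s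
  have e2 : γ (t + n • ℓ) = γ t := hp.zsmul n t
  simp only [zero_add] at hn
  rcases lt_or_ge (t + n • ℓ) ℓ with h3 | h3
  · have := hinj hn ⟨by linarith [hn.1], h3⟩ (by rw [e1, e2, h])
    linarith
  · have e3 : γ (t + n • ℓ - ℓ) = γ t := by rw [hp.sub_eq, e2]
    have := hinj hn (x₂ := t + n • ℓ - ℓ) ⟨by linarith, by linarith [hn.2]⟩ (by rw [e1, e3, h])
    linarith

lemma exists_sigma (ℓ : ℝ) (hℓ : 0 < ℓ) (γ : ℝ → ℝ × ℝ)
    (hsmooth : ContDiff ℝ (⊤ : ℕ∞) γ)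
    (hper : ∀ t, γ (t + ℓ) = γ t)
    (hinj : InjOn γ (Ico 0 ℓ))
    (hcurv : ∀ t, 0 < om (deriv γ t) (deriv (deriv γ) t)) :
    ∃ σ : ℝ → ℝ, Continuous σ ∧ (∀ t, σ (t + ℓ) = σ t + ℓ) ∧ (∀ t, t < σ t) ∧ (∀ t, σ t < t + ℓ) ∧
      (∀ t x, t < x → x < σ t → 0 < L12 γ t x) ∧ (∀ t x, σ t < x → x < t + ℓ → L12 γ t x < 0) := by
  have hpi := Real.pi_pos
  obtain ⟨Θ, Θ', r, hr, hv, hΘ, hΘ', C, hC⟩ := exists_angle ℓ γ hsmooth hper hcurv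
  have pv : ∀ t, deriv γ (t + ℓ) = deriv γ t := by
    intro t
    rw [← deriv_comp_add_const]
    congr 1; funext x; exact hper x
  have mΘ : StrictMono Θ := strictMono_of_deriv_pos fun t => by rw [(hΘ t).deriv]; exact hΘ' t
  have cΘ : Continuous Θ := continuous_iff_continuousAt.2 fun t => (hΘ t).continuousAt
  have hCpos : 0 < C := by
    have := mΘ (show (0:ℝ) < 0 + ℓ by linarith)
    rw [hC] at this; linarith
  have hL : ∀ s t, L12 γ s t = r s * r t * Real.sin (Θ t - Θ s) := by
    intro s t
    simp only [L12, om, hv, Real.sin_sub]; ring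
  obtain ⟨k, hk⟩ : ∃ k : ℕ, C = k * (2 * Real.pi) := by
    have h0 := pv 0
    rw [hv, hv, hC] at h0
    have h1 := congrArg Prod.fst h0
    have h2 := congrArg Prod.snd h0
    simp only at h1 h2
    have hr1 : r (0 + ℓ) = r 0 := by
      have hsq : r (0 + ℓ) ^ 2 = r 0 ^ 2 := by
        have a1 := Real.sin_sq_add_cos_sq (Θ 0 + C)
        have a2 := Real.sin_sq_add_cos_sq (Θ 0)
        have e1 : (r (0 + ℓ) * Real.cos (Θ 0 + C)) ^ 2 = (r 0 * Real.cos (Θ 0)) ^ 2 := by rw [h1]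
        have e2 : (r (0 + ℓ) * Real.sin (Θ 0 + C)) ^ 2 = (r 0 * Real.sin (Θ 0)) ^ 2 := by rw [h2]
        linear_combination e1 + e2 - r (0 + ℓ) ^ 2 * a1 + r 0 ^ 2 * a2
      have := hr 0
      have := hr (0 + ℓ)
      nlinarith
    rw [hr1] at h1 h2
    have h1' := mul_left_cancel₀ (hr 0).ne' h1
    have h2' := mul_left_cancel₀ (hr 0).ne' h2
    have hcos : Real.cos C = 1 := by
      have : C = (Θ 0 + C) - Θ 0 := by ring
      rw [this, Real.cos_sub, h1', h2']
      linarith [Real.sin_sq_add_cos_sq (Θ 0)]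
    obtain ⟨n, hn⟩ := (Real.cos_eq_one_iff C).1 hcos
    have hnpos : 0 ≤ n := by
      by_contra! hneg
      have : (n : ℝ) < 0 := by exact_mod_cast hneg
      nlinarith
    refine ⟨n.toNat, ?_⟩
    rw [← hn]
    congr 1
    exact_mod_cast (Int.toNat_of_nonneg hnpos).symm
  have sΘ : Function.Surjective Θ := by
    intro y
    have hup : ∀ n : ℕ, Θ (n * ℓ) = Θ 0 + n * C := by
      intro n
      induction n with
      | zero => simp
      | succ n ih => push_cast; rw [add_mul, one_mul, hC, ih]; ring
    have hdn : ∀ n : ℕ, Θ (-(n * ℓ)) = Θ 0 - n * C := by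
      intro n
      induction n with
      | zero => simp
      | succ n ih =>
        have := hC (-((n + 1 : ℕ) * ℓ))
        rw [show -(((n + 1 : ℕ) : ℝ) * ℓ) + ℓ = -(n * ℓ) by push_cast; ring, ih] at this
        push_cast at this ⊢
        linarith
    refine mem_range_of_exists_le_of_exists_ge cΘ ?_ ?_
    · obtain ⟨n, hn⟩ := exists_nat_gt ((Θ 0 - y) / C)
      rw [div_lt_iff₀ hCpos] at hn
      exact ⟨_, by rw [hdn n]; linarith⟩
    · obtain ⟨n, hn⟩ := exists_nat_gt ((y - Θ 0) / C)
      rw [div_lt_iff₀ hCpos] at hn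
      exact ⟨_, by rw [hup n]; linarith⟩
  set e := mΘ.orderIsoOfSurjective Θ sΘ with he
  have he1 : ∀ t, e t = Θ t := fun t => rfl
  set φ : ℝ → ℝ := fun a => e.symm a with hφ
  have cφ : Continuous φ := e.symm.continuous
  have mφ : StrictMono φ := e.symm.strictMono
  have hΘφ : ∀ a, Θ (φ a) = a := fun a => e.apply_symm_apply a
  have hφΘ : ∀ t, φ (Θ t) = t := fun t => e.symm_apply_apply t
  have pφ : ∀ a, φ (a + C) = φ a + ℓ := by
    intro a
    rw [← hφΘ (φ a + ℓ), hC, hΘφ]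
  have dφ : ∀ a, HasDerivAt φ (Θ' (φ a))⁻¹ a := fun a =>
    HasDerivAt.of_local_left_inverse cφ.continuousAt (hΘ (φ a)) (hΘ' _).ne'
      (Filter.Eventually.of_forall hΘφ)
  have hγ : ∀ t, HasDerivAt γ (deriv γ t) t := fun t =>
    (hsmooth.differentiable (by simp) t).hasDerivAt
  have hk1 : k = 1 := by
    by_contra hne
    have hk0 : k ≠ 0 := by
      rintro rfl
      simp at hk; linarith
    have hX1 : ∀ t, HasDerivAt (fun t => (γ t).1) (deriv γ t).1 t := fun t => (hγ t).fst
    have hY1 : ∀ t, HasDerivAt (fun t => (γ t).2) (deriv γ t).2 t := fun t => (hγ t).snd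
    refine no_multi_turn (fun a => (γ (φ a)).1) (fun a => (γ (φ a)).2)
      (fun a => r (φ a) * (Θ' (φ a))⁻¹) (fun a => mul_pos (hr _) (inv_pos.2 (hΘ' _))) ?_ ?_ k
      (by omega) ?_ ?_ ?_
    · intro a
      refine ((hX1 (φ a)).comp a (dφ a)).congr_deriv ?_
      rw [hv, hΘφ]; ring
    · intro a
      refine ((hY1 (φ a)).comp a (dφ a)).congr_deriv ?_
      rw [hv, hΘφ]; ring
    · intro a
      rw [← hk, pφ, hper]
    · intro a
      rw [← hk, pφ, hper]
    · intro x d h1 h2 h3 h4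
      rw [← hk] at h2
      refine simple_of_inj ℓ hℓ γ hper hinj (φ x) (φ (x + d)) (mφ (by linarith)) ?_
        (Prod.ext h3.symm h4.symm)
      rw [← pφ]; exact mφ (by linarith)
  have hC2 : C = 2 * Real.pi := by rw [hk, hk1]; simp
  refine ⟨fun t => φ (Θ t + Real.pi), by fun_prop, ?_, ?_, ?_, ?_, ?_⟩
  · intro t
    show φ (Θ (t + ℓ) + Real.pi) = φ (Θ t + Real.pi) + ℓ
    rw [hC, show Θ t + C + Real.pi = Θ t + Real.pi + C by ring, pφ]
  · intro t
    show t < φ (Θ t + Real.pi)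
    conv_lhs => rw [← hφΘ t]
    exact mφ (by linarith)
  · intro t
    show φ (Θ t + Real.pi) < t + ℓ
    conv_rhs => rw [← hφΘ t, ← pφ]
    exact mφ (by linarith)
  · intro t x h1 h2
    have h3 := mΘ h1
    have h4 := mΘ h2
    rw [hΘφ] at h4
    rw [hL]
    exact mul_pos (mul_pos (hr _) (hr _)) (Real.sin_pos_of_pos_of_lt_pi (by linarith) (by linarith))
  · intro t x h1 h2
    have h3 := mΘ h1
    have h4 := mΘ h2
    rw [hΘφ] at h3
    rw [hC, hC2] at h4
    rw [hL]
    have := Real.sin_pos_of_pos_of_lt_pi (x := Θ x - Θ t - Real.pi) (by linarith) (by linarith)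
    rw [Real.sin_sub_pi] at this
    nlinarith [mul_pos (hr t) (hr x)]

/-- Working hypotheses: a locally convex closed curve with its half-turn map `σ`. -/
structure BSetup (ℓ : ℝ) (γ : ℝ → ℝ × ℝ) (σ : ℝ → ℝ) : Prop where
  hℓ : 0 < ℓ
  smooth : ContDiff ℝ (⊤ : ℕ∞) γ
  per : ∀ t, γ (t + ℓ) = γ t
  curv : ∀ t, 0 < om (deriv γ t) (deriv (deriv γ) t)
  cσ : Continuous σ
  pσ : ∀ t, σ (t + ℓ) = σ t + ℓ
  ltσ : ∀ t, t < σ t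
  σlt : ∀ t, σ t < t + ℓ
  pos : ∀ t x, t < x → x < σ t → 0 < L12 γ t x
  neg : ∀ t x, σ t < x → x < t + ℓ → L12 γ t x < 0

/-- The height function over the tangent at `b`. -/
noncomputable def ff (γ : ℝ → ℝ × ℝ) (b x : ℝ) : ℝ := om (deriv γ b) (γ x)

open Classical in
/-- Inverse of the height function on the decreasing branch. -/
noncomputable def binv (ℓ : ℝ) (γ : ℝ → ℝ × ℝ) (σ : ℝ → ℝ) (b y : ℝ) : ℝ :=
  if h : ∃ a, a ∈ Ioo (σ b - ℓ) b ∧ ff γ b a = y then h.choose else 0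

/-- The previous bounce point. -/
noncomputable def tau (ℓ : ℝ) (γ : ℝ → ℝ × ℝ) (σ : ℝ → ℝ) (b c : ℝ) : ℝ :=
  binv ℓ γ σ b (ff γ b c)

lemma L12_swap (γ : ℝ → ℝ × ℝ) (a b : ℝ) : L12 γ a b = - L12 γ b a := by
  simp only [L12, om]; ring

namespace BSetup

variable {ℓ : ℝ} {γ : ℝ → ℝ × ℝ} {σ : ℝ → ℝ}

lemma smooth1 (S : BSetup ℓ γ σ) : ContDiff ℝ (⊤ : ℕ∞) (deriv γ) :=
  (contDiff_infty_iff_deriv.1 S.smooth).2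

lemma smooth2 (S : BSetup ℓ γ σ) : ContDiff ℝ (⊤ : ℕ∞) (deriv (deriv γ)) :=
  (contDiff_infty_iff_deriv.1 S.smooth1).2

lemma hγ (S : BSetup ℓ γ σ) (t : ℝ) : HasStrictDerivAt γ (deriv γ t) t :=
  S.smooth.contDiffAt.hasStrictDerivAt (by simp)

lemma hv (S : BSetup ℓ γ σ) (t : ℝ) : HasStrictDerivAt (deriv γ) (deriv (deriv γ) t) t :=
  S.smooth1.contDiffAt.hasStrictDerivAt (by simp)

lemma pv (S : BSetup ℓ γ σ) (t : ℝ) : deriv γ (t + ℓ) = deriv γ t := by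
  rw [← deriv_comp_add_const]
  congr 1; funext x; exact S.per x

lemma pk (S : BSetup ℓ γ σ) (t : ℝ) : deriv (deriv γ) (t + ℓ) = deriv (deriv γ) t := by
  rw [← deriv_comp_add_const]
  congr 1; funext x; exact S.pv x

lemma cL12 (S : BSetup ℓ γ σ) : Continuous fun p : ℝ × ℝ => L12 γ p.1 p.2 := by
  have := S.smooth1.continuous
  unfold L12 om; fun_prop

lemma cL11 (S : BSetup ℓ γ σ) : Continuous fun p : ℝ × ℝ => L11 γ p.1 p.2 := by
  have := S.smooth2.continuous
  have := S.smooth.continuous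
  unfold L11 om; fun_prop

lemma cL22 (S : BSetup ℓ γ σ) : Continuous fun p : ℝ × ℝ => L22 γ p.1 p.2 := by
  have := S.smooth2.continuous
  have := S.smooth.continuous
  unfold L22 om; fun_prop

lemma cff (S : BSetup ℓ γ σ) : Continuous fun p : ℝ × ℝ => ff γ p.1 p.2 := by
  have := S.smooth1.continuous
  have := S.smooth.continuous
  unfold ff om; fun_prop

lemma cff' (S : BSetup ℓ γ σ) (b : ℝ) : Continuous (ff γ b) :=
  S.cff.comp (Continuous.prodMk_right b)

lemma dff (S : BSetup ℓ γ σ) (b x : ℝ) : HasDerivAt (ff γ b) (L12 γ b x) x := by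
  have h := (S.hγ x).hasDerivAt
  have h1 : HasDerivAt (fun t => (γ t).1) (deriv γ x).1 x := h.fst
  have h2 : HasDerivAt (fun t => (γ t).2) (deriv γ x).2 x := h.snd
  refine ((h2.const_mul (deriv γ b).1).sub (h1.mul_const (deriv γ b).2)).congr_deriv ?_
  simp [L12, om]

lemma pL12r (S : BSetup ℓ γ σ) (b x : ℝ) : L12 γ b (x + ℓ) = L12 γ b x := by
  simp [L12, S.pv]

lemma pff (S : BSetup ℓ γ σ) (b x : ℝ) : ff γ b (x + ℓ) = ff γ b x := by
  simp [ff, S.per]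

lemma neg' (S : BSetup ℓ γ σ) (b x : ℝ) (h1 : σ b - ℓ < x) (h2 : x < b) : L12 γ b x < 0 := by
  rw [← S.pL12r]; exact S.neg _ _ (by linarith) (by linarith)

lemma ffmono (S : BSetup ℓ γ σ) (b : ℝ) : StrictMonoOn (ff γ b) (Icc b (σ b)) := by
  apply strictMonoOn_of_deriv_pos (convex_Icc _ _) (S.cff' b).continuousOn
  intro x hx
  rw [interior_Icc] at hx
  rw [(S.dff b x).deriv]; exact S.pos _ _ hx.1 hx.2

lemma ffanti (S : BSetup ℓ γ σ) (b : ℝ) : StrictAntiOn (ff γ b) (Icc (σ b - ℓ) b) := by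
  apply strictAntiOn_of_deriv_neg (convex_Icc _ _) (S.cff' b).continuousOn
  intro x hx
  rw [interior_Icc] at hx
  rw [(S.dff b x).deriv]; exact S.neg' _ _ hx.1 hx.2

lemma ffσ (S : BSetup ℓ γ σ) (b : ℝ) : ff γ b (σ b - ℓ) = ff γ b (σ b) := by
  rw [← S.pff b (σ b - ℓ)]; simp

lemma L12σ (S : BSetup ℓ γ σ) (b : ℝ) : L12 γ b (σ b) ≤ 0 := by
  have hc : Continuous (L12 γ b) := S.cL12.comp (Continuous.prodMk_right b)
  refine le_of_tendsto (hc.continuousWithinAt (s := Ioi (σ b)) (x := σ b)).tendsto ?_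
  filter_upwards [Ioo_mem_nhdsGT (S.σlt b)] with x hx using (S.neg _ _ hx.1 hx.2).le

lemma reduce (S : BSetup ℓ γ σ) (b c : ℝ) (h : 0 < L12 γ b c) :
    ∃ n : ℤ, c + n • ℓ ∈ Ioo b (σ b) := by
  obtain ⟨n, hn, -⟩ := existsUnique_add_zsmul_mem_Ico S.hℓ c b
  have hp : Function.Periodic (L12 γ b) ℓ := S.pL12r b
  have h1 : L12 γ b (c + n • ℓ) = L12 γ b c := hp.zsmul n c
  rw [← h1] at h
  refine ⟨n, lt_of_le_of_ne hn.1 ?_, ?_⟩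
  · intro e
    rw [← e] at h
    simp [L12, om] at h
  · by_contra! hcon
    rcases hcon.lt_or_eq with h2 | h2
    · linarith [S.neg _ _ h2 hn.2]
    · rw [← h2] at h; linarith [S.L12σ b]

lemma ff_mem_right (S : BSetup ℓ γ σ) (b c : ℝ) (hc : c ∈ Ioo b (σ b)) :
    ff γ b c ∈ Ioo (ff γ b b) (ff γ b (σ b)) :=
  ⟨S.ffmono b ⟨le_rfl, (S.ltσ b).le⟩ ⟨hc.1.le, hc.2.le⟩ hc.1,
    S.ffmono b ⟨hc.1.le, hc.2.le⟩ ⟨(S.ltσ b).le, le_rfl⟩ hc.2⟩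

lemma ff_mem_left (S : BSetup ℓ γ σ) (b a : ℝ) (ha : a ∈ Ioo (σ b - ℓ) b) :
    ff γ b a ∈ Ioo (ff γ b b) (ff γ b (σ b)) := by
  rw [← S.ffσ]
  have : σ b - ℓ < b := by linarith [S.σlt b]
  exact ⟨S.ffanti b ⟨ha.1.le, ha.2.le⟩ ⟨this.le, le_rfl⟩ ha.2,
    S.ffanti b ⟨le_rfl, this.le⟩ ⟨ha.1.le, ha.2.le⟩ ha.1⟩

lemma exists_left (S : BSetup ℓ γ σ) (b y : ℝ) (hy : y ∈ Ioo (ff γ b b) (ff γ b (σ b))) :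
    ∃ a, a ∈ Ioo (σ b - ℓ) b ∧ ff γ b a = y := by
  have h := intermediate_value_Ioo' (f := ff γ b) (by linarith [S.σlt b] : σ b - ℓ ≤ b)
    (S.cff' b).continuousOn
  rw [S.ffσ] at h
  obtain ⟨a, ha, e⟩ := h hy
  exact ⟨a, ha, e⟩

lemma exists_right (S : BSetup ℓ γ σ) (b y : ℝ) (hy : y ∈ Ioo (ff γ b b) (ff γ b (σ b))) :
    ∃ c, c ∈ Ioo b (σ b) ∧ ff γ b c = y := by
  obtain ⟨a, ha, e⟩ := intermediate_value_Ioo (f := ff γ b) (S.ltσ b).le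
    (S.cff' b).continuousOn hy
  exact ⟨a, ha, e⟩

lemma binv_spec (S : BSetup ℓ γ σ) (b y : ℝ) (hy : y ∈ Ioo (ff γ b b) (ff γ b (σ b))) :
    binv ℓ γ σ b y ∈ Ioo (σ b - ℓ) b ∧ ff γ b (binv ℓ γ σ b y) = y := by
  have h := S.exists_left b y hy
  rw [binv, dif_pos h]; exact h.choose_spec

lemma binv_unique (S : BSetup ℓ γ σ) (b a : ℝ) (ha : a ∈ Ioo (σ b - ℓ) b) :
    binv ℓ γ σ b (ff γ b a) = a := by
  obtain ⟨h1, h2⟩ := S.binv_spec b _ (S.ff_mem_left b a ha)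
  exact (S.ffanti b).injOn ⟨h1.1.le, h1.2.le⟩ ⟨ha.1.le, ha.2.le⟩ h2

lemma ff_mem (S : BSetup ℓ γ σ) (b c : ℝ) (h : 0 < L12 γ b c) :
    ff γ b c ∈ Ioo (ff γ b b) (ff γ b (σ b)) := by
  obtain ⟨n, hn⟩ := S.reduce b c h
  have hp : Function.Periodic (ff γ b) ℓ := S.pff b
  rw [← hp.zsmul n c]
  exact S.ff_mem_right b _ hn

lemma tau_mem (S : BSetup ℓ γ σ) (b c : ℝ) (h : 0 < L12 γ b c) :
    tau ℓ γ σ b c ∈ Ioo (σ b - ℓ) b := (S.binv_spec b _ (S.ff_mem b c h)).1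

lemma ff_tau (S : BSetup ℓ γ σ) (b c : ℝ) (h : 0 < L12 γ b c) :
    ff γ b (tau ℓ γ σ b c) = ff γ b c := (S.binv_spec b _ (S.ff_mem b c h)).2

lemma tau_unique (S : BSetup ℓ γ σ) (b c a : ℝ) (ha : a ∈ Ioo (σ b - ℓ) b)
    (h : ff γ b a = ff γ b c) : tau ℓ γ σ b c = a := by
  rw [tau, ← h, S.binv_unique b a ha]

lemma L12_left (S : BSetup ℓ γ σ) (b a : ℝ) (ha : a ∈ Ioo (σ b - ℓ) b) : 0 < L12 γ a b := by
  rw [L12_swap]; linarith [S.neg' b a ha.1 ha.2]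

lemma tau_pos (S : BSetup ℓ γ σ) (b c : ℝ) (h : 0 < L12 γ b c) : 0 < L12 γ (tau ℓ γ σ b c) b :=
  S.L12_left b _ (S.tau_mem b c h)

lemma tau_gt (S : BSetup ℓ γ σ) (b c x : ℝ) (h : 0 < L12 γ b c) (hx : x ∈ Ioo (σ b - ℓ) b)
    (hlt : ff γ b c < ff γ b x) : x < tau ℓ γ σ b c := by
  have hm := S.tau_mem b c h
  rw [← S.ff_tau b c h] at hlt
  exact ((S.ffanti b).lt_iff_gt ⟨hm.1.le, hm.2.le⟩ ⟨hx.1.le, hx.2.le⟩).1 hlt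

lemma tau_lt (S : BSetup ℓ γ σ) (b c x : ℝ) (h : 0 < L12 γ b c) (hx : x ∈ Ioo (σ b - ℓ) b)
    (hlt : ff γ b x < ff γ b c) : tau ℓ γ σ b c < x := by
  have hm := S.tau_mem b c h
  rw [← S.ff_tau b c h] at hlt
  exact ((S.ffanti b).lt_iff_gt ⟨hx.1.le, hx.2.le⟩ ⟨hm.1.le, hm.2.le⟩).1 hlt

lemma tau_perc (S : BSetup ℓ γ σ) (b c : ℝ) : tau ℓ γ σ b (c + ℓ) = tau ℓ γ σ b c := by
  rw [tau, tau, S.pff]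

lemma pffl (S : BSetup ℓ γ σ) (b x : ℝ) : ff γ (b + ℓ) x = ff γ b x := by
  simp [ff, S.pv]

lemma tau_perb (S : BSetup ℓ γ σ) (b c : ℝ) (h : 0 < L12 γ b c) :
    tau ℓ γ σ (b + ℓ) c = tau ℓ γ σ b c + ℓ := by
  have hm := S.tau_mem b c h
  apply S.tau_unique
  · rw [S.pσ]; exact ⟨by linarith [hm.1], by linarith [hm.2]⟩
  · rw [S.pff, S.pffl, S.pffl, S.ff_tau b c h]

open Topology Filter in
lemma tau_cont (S : BSetup ℓ γ σ) :
    ContinuousOn (fun p : ℝ × ℝ => tau ℓ γ σ p.1 p.2) {p | 0 < L12 γ p.1 p.2} := by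
  rintro ⟨b, c⟩ hp
  simp only [mem_ofPred_eq] at hp
  have hm := S.tau_mem b c hp
  have cc := S.cff
  have cs := S.cσ
  have aux : ∀ x, Continuous fun p : ℝ × ℝ => ff γ p.1 x := fun x =>
    cc.comp (continuous_fst.prodMk continuous_const)
  have hopen : ∀ x ∈ Ioo (σ b - ℓ) b, ∀ᶠ p : ℝ × ℝ in 𝓝 (b, c), x ∈ Ioo (σ p.1 - ℓ) p.1 := by
    intro x hx
    have h1 : ∀ᶠ p : ℝ × ℝ in 𝓝 (b, c), σ p.1 - ℓ < x :=
      (isOpen_lt (by fun_prop) continuous_const).mem_nhds hx.1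
    have h2 : ∀ᶠ p : ℝ × ℝ in 𝓝 (b, c), x < p.1 :=
      (isOpen_lt continuous_const (by fun_prop)).mem_nhds hx.2
    filter_upwards [h1, h2] with p h3 h4 using ⟨h3, h4⟩
  have hΩ : ∀ᶠ p : ℝ × ℝ in 𝓝[{p : ℝ × ℝ | 0 < L12 γ p.1 p.2}] (b, c), 0 < L12 γ p.1 p.2 :=
    self_mem_nhdsWithin
  rw [ContinuousWithinAt]
  refine tendsto_order.2 ⟨fun x hx => ?_, fun x hx => ?_⟩
  · simp only at hx
    obtain ⟨x', hx1, hx2⟩ := exists_between (max_lt hx hm.1)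
    have hx' : x' ∈ Ioo (σ b - ℓ) b := ⟨lt_of_le_of_lt (le_max_right _ _) hx1, hx2.trans hm.2⟩
    have hf : ff γ b c < ff γ b x' := by
      rw [← S.ff_tau b c hp]
      exact S.ffanti b ⟨hx'.1.le, hx'.2.le⟩ ⟨hm.1.le, hm.2.le⟩ hx2
    have h1 : ∀ᶠ p : ℝ × ℝ in 𝓝 (b, c), ff γ p.1 p.2 < ff γ p.1 x' :=
      (isOpen_lt cc (aux x')).mem_nhds hf
    filter_upwards [hΩ, (hopen x' hx').filter_mono inf_le_left, h1.filter_mono inf_le_left]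
      with p h2 h3 h4
    exact (lt_of_le_of_lt (le_max_left _ _) hx1).trans (S.tau_gt _ _ _ h2 h3 h4)
  · simp only at hx
    obtain ⟨x', hx1, hx2⟩ := exists_between (lt_min hx hm.2)
    have hx' : x' ∈ Ioo (σ b - ℓ) b := ⟨hm.1.trans hx1, lt_of_lt_of_le hx2 (min_le_right _ _)⟩
    have hf : ff γ b x' < ff γ b c := by
      rw [← S.ff_tau b c hp]
      exact S.ffanti b ⟨hm.1.le, hm.2.le⟩ ⟨hx'.1.le, hx'.2.le⟩ hx1
    have h1 : ∀ᶠ p : ℝ × ℝ in 𝓝 (b, c), ff γ p.1 x' < ff γ p.1 p.2 :=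
      (isOpen_lt (aux x') cc).mem_nhds hf
    filter_upwards [hΩ, (hopen x' hx').filter_mono inf_le_left, h1.filter_mono inf_le_left]
      with p h2 h3 h4
    exact (S.tau_lt _ _ _ h2 h3 h4).trans (lt_of_lt_of_le hx2 (min_le_left _ _))

open Topology Filter

lemma om_cont_tendsto {α : Type*} {l : Filter α} {f g : α → ℝ × ℝ} {u v : ℝ × ℝ}
    (hf : Tendsto f l (𝓝 u)) (hg : Tendsto g l (𝓝 v)) :
    Tendsto (fun x => om (f x) (g x)) l (𝓝 (om u v)) := by
  have : Continuous fun p : (ℝ × ℝ) × (ℝ × ℝ) => om p.1 p.2 := by unfold om; fun_prop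
  exact (this.tendsto (u, v)).comp (hf.prodMk_nhds hg)

/-- The filter of phase points approaching the diagonal point `(s,s)`. -/
def dfil (γ : ℝ → ℝ × ℝ) (s : ℝ) : Filter (ℝ × ℝ) := 𝓝[{p : ℝ × ℝ | 0 < L12 γ p.1 p.2}] (s, s)

lemma dfil_le (s : ℝ) : dfil γ s ≤ 𝓝 (s, s) := inf_le_left

lemma dfil_pos (s : ℝ) : ∀ᶠ p in dfil γ s, 0 < L12 γ p.1 p.2 := self_mem_nhdsWithin

lemma dfil_fst (s : ℝ) : Tendsto Prod.fst (dfil γ s) (𝓝 s) :=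
  (continuous_fst.tendsto (s, s)).mono_left (dfil_le s)

lemma dfil_snd (s : ℝ) : Tendsto Prod.snd (dfil γ s) (𝓝 s) :=
  (continuous_snd.tendsto (s, s)).mono_left (dfil_le s)

lemma dfil_lt (S : BSetup ℓ γ σ) (s : ℝ) : ∀ᶠ p in dfil γ s, p.1 < p.2 := by
  have cs := S.cσ
  have h1 : ∀ᶠ p : ℝ × ℝ in 𝓝 (s, s), σ p.1 - ℓ < p.2 :=
    (isOpen_lt (by fun_prop) (by fun_prop)).mem_nhds (by
      have := S.σlt s
      show σ s - ℓ < s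
      linarith)
  filter_upwards [h1.filter_mono (dfil_le s), dfil_pos s] with p h2 h3
  by_contra! hcon
  rcases hcon.lt_or_eq with h | h
  · linarith [S.neg' _ _ h2 h]
  · rw [h] at h3; simp [L12, om] at h3

lemma tau_tendsto (S : BSetup ℓ γ σ) (s : ℝ) :
    Tendsto (fun p : ℝ × ℝ => tau ℓ γ σ p.1 p.2) (dfil γ s) (𝓝 s) := by
  have cc := S.cff
  have cs := S.cσ
  refine tendsto_order.2 ⟨fun x hx => ?_, fun x hx => ?_⟩
  · obtain ⟨x', hx1, hx2⟩ := exists_between (max_lt hx (show σ s - ℓ < s by linarith [S.σlt s]))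
    have hx' : σ s - ℓ < x' := lt_of_le_of_lt (le_max_right _ _) hx1
    have hf : ff γ s s < ff γ s x' :=
      S.ffanti s ⟨hx'.le, hx2.le⟩ ⟨(hx'.trans hx2).le, le_rfl⟩ hx2
    have h1 : ∀ᶠ p : ℝ × ℝ in 𝓝 (s, s), ff γ p.1 p.2 < ff γ p.1 x' :=
      (isOpen_lt cc (cc.comp (continuous_fst.prodMk continuous_const))).mem_nhds hf
    have h2 : ∀ᶠ p : ℝ × ℝ in 𝓝 (s, s), σ p.1 - ℓ < x' :=
      (isOpen_lt (by fun_prop) continuous_const).mem_nhds hx'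
    have h3 : ∀ᶠ p : ℝ × ℝ in 𝓝 (s, s), x' < p.1 :=
      (isOpen_lt continuous_const (by fun_prop)).mem_nhds hx2
    filter_upwards [dfil_pos s, h1.filter_mono (dfil_le s), h2.filter_mono (dfil_le s),
      h3.filter_mono (dfil_le s)] with p h4 h5 h6 h7
    exact (lt_of_le_of_lt (le_max_left _ _) hx1).trans (S.tau_gt _ _ _ h4 ⟨h6, h7⟩ h5)
  · filter_upwards [dfil_pos s, (dfil_fst s).eventually (gt_mem_nhds hx)] with p h1 h2
    exact (S.tau_mem _ _ h1).2.trans h2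

/-- The inverse billiard map preserves the diagonal filter. -/
lemma T_tendsto (S : BSetup ℓ γ σ) (s : ℝ) :
    Tendsto (fun p : ℝ × ℝ => (tau ℓ γ σ p.1 p.2, p.1)) (dfil γ s) (dfil γ s) := by
  refine tendsto_nhdsWithin_iff.2 ⟨(S.tau_tendsto s).prodMk_nhds (dfil_fst s), ?_⟩
  filter_upwards [dfil_pos s] with p hp using S.tau_pos _ _ hp

lemma quot_tendsto {α : Type*} {l : Filter α} {f : ℝ → ℝ × ℝ} {f' : ℝ × ℝ} {s : ℝ}
    (h : HasStrictDerivAt f f' s) {x y : α → ℝ} (hx : Tendsto x l (𝓝 s)) (hy : Tendsto y l (𝓝 s))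
    (hne : ∀ᶠ i in l, x i < y i) :
    Tendsto (fun i => (y i - x i)⁻¹ • (f (y i) - f (x i))) l (𝓝 f') := by
  have h1 := (hasStrictFDerivAt_iff_isLittleO.1 h.hasStrictFDerivAt).comp_tendsto (hy.prodMk_nhds hx)
  have h2 := (h1.tendsto_inv_smul_nhds_zero).add_const f'
  rw [zero_add] at h2
  refine h2.congr' ?_
  filter_upwards [hne] with i hi
  have : y i - x i ≠ 0 := by linarith
  simp only [Function.comp, ContinuousLinearMap.toSpanSingleton_apply]
  rw [smul_sub, smul_smul, inv_mul_cancel₀ this, one_smul]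
  abel

lemma L12_quot (S : BSetup ℓ γ σ) (s : ℝ) {α : Type*} {l : Filter α} {x y : α → ℝ}
    (hx : Tendsto x l (𝓝 s)) (hy : Tendsto y l (𝓝 s)) (hne : ∀ᶠ i in l, x i < y i) :
    Tendsto (fun i => L12 γ (x i) (y i) / (y i - x i)) l
      (𝓝 (om (deriv γ s) (deriv (deriv γ) s))) := by
  have h1 := quot_tendsto (S.hv s) hx hy hne
  have h2 : Tendsto (fun i => deriv γ (x i)) l (𝓝 (deriv γ s)) :=
    (S.smooth1.continuous.tendsto s).comp hx
  refine (om_cont_tendsto h2 h1).congr' ?_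
  filter_upwards [hne] with i hi
  have : y i - x i ≠ 0 := by linarith
  simp only [om, L12, Prod.smul_fst, Prod.smul_snd, Prod.fst_sub, Prod.snd_sub, smul_eq_mul]
  field_simp
  ring

/-- Second-order behaviour of the height function, to the right. -/
lemma ff_quot_right (S : BSetup ℓ γ σ) (s : ℝ) {α : Type*} {l : Filter α} {x y : α → ℝ}
    (hx : Tendsto x l (𝓝 s)) (hy : Tendsto y l (𝓝 s)) (hne : ∀ᶠ i in l, x i < y i) :
    Tendsto (fun i => (ff γ (x i) (y i) - ff γ (x i) (x i)) / (y i - x i) ^ 2) l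
      (𝓝 (om (deriv γ s) (deriv (deriv γ) s) / 2)) := by
  have mvt : ∀ i, ∃ c, x i < y i → c ∈ Ioo (x i) (y i) ∧
      (ff γ (x i) (y i) - ff γ (x i) (x i)) / (y i - x i) ^ 2
        = L12 γ (x i) c / (c - x i) / 2 := by
    intro i
    by_cases h : x i < y i
    · obtain ⟨c, hc, e⟩ := exists_ratio_hasDerivAt_eq_ratio_slope (ff γ (x i)) (L12 γ (x i)) h
        (S.cff' _).continuousOn (fun z _ => S.dff _ z) (fun z => (z - x i) ^ 2)
        (fun z => 2 * (z - x i)) (by fun_prop)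
        (fun z _ => (((hasDerivAt_id z).sub_const (x i)).fun_pow 2).congr_deriv (by simp))
      refine ⟨c, fun _ => ⟨hc, ?_⟩⟩
      have h1 : c - x i ≠ 0 := by linarith [hc.1]
      have h2 : y i - x i ≠ 0 := by linarith
      field_simp
      simp only [sub_self] at e
      linear_combination -e
    · exact ⟨0, fun h' => absurd h' h⟩
  choose c hc using mvt
  have hcs : Tendsto c l (𝓝 s) := by
    refine tendsto_of_tendsto_of_tendsto_of_le_of_le' hx hy ?_ ?_
    · filter_upwards [hne] with i hi using (hc i hi).1.1.le
    · filter_upwards [hne] with i hi using (hc i hi).1.2.le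
  refine ((S.L12_quot s hx hcs ?_).div_const 2).congr' ?_
  · filter_upwards [hne] with i hi using (hc i hi).1.1
  · filter_upwards [hne] with i hi using (hc i hi).2.symm

/-- Second-order behaviour of the height function, to the left. -/
lemma ff_quot_left (S : BSetup ℓ γ σ) (s : ℝ) {α : Type*} {l : Filter α} {x y : α → ℝ}
    (hx : Tendsto x l (𝓝 s)) (hy : Tendsto y l (𝓝 s)) (hne : ∀ᶠ i in l, y i < x i) :
    Tendsto (fun i => (ff γ (x i) (y i) - ff γ (x i) (x i)) / (y i - x i) ^ 2) l
      (𝓝 (om (deriv γ s) (deriv (deriv γ) s) / 2)) := by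
  have mvt : ∀ i, ∃ c, y i < x i → c ∈ Ioo (y i) (x i) ∧
      (ff γ (x i) (y i) - ff γ (x i) (x i)) / (y i - x i) ^ 2
        = L12 γ c (x i) / (x i - c) / 2 := by
    intro i
    by_cases h : y i < x i
    · obtain ⟨c, hc, e⟩ := exists_ratio_hasDerivAt_eq_ratio_slope (ff γ (x i)) (L12 γ (x i)) h
        (S.cff' _).continuousOn (fun z _ => S.dff _ z) (fun z => (z - x i) ^ 2)
        (fun z => 2 * (z - x i)) (by fun_prop)
        (fun z _ => (((hasDerivAt_id z).sub_const (x i)).fun_pow 2).congr_deriv (by simp))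
      refine ⟨c, fun _ => ⟨hc, ?_⟩⟩
      have h1 : x i - c ≠ 0 := by linarith [hc.2]
      have h2 : y i - x i ≠ 0 := by linarith
      rw [L12_swap]
      field_simp
      simp only [sub_self] at e
      linear_combination -e
    · exact ⟨0, fun h' => absurd h' h⟩
  choose c hc using mvt
  have hcs : Tendsto c l (𝓝 s) := by
    refine tendsto_of_tendsto_of_tendsto_of_le_of_le' hy hx ?_ ?_
    · filter_upwards [hne] with i hi using (hc i hi).1.1.le
    · filter_upwards [hne] with i hi using (hc i hi).1.2.le
  refine ((S.L12_quot s hcs hx ?_).div_const 2).congr' ?_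
  · filter_upwards [hne] with i hi using (hc i hi).1.2
  · filter_upwards [hne] with i hi using (hc i hi).2.symm

lemma gap_ratio (S : BSetup ℓ γ σ) (s : ℝ) :
    Tendsto (fun p : ℝ × ℝ => (p.1 - tau ℓ γ σ p.1 p.2) / (p.2 - p.1)) (dfil γ s) (𝓝 1) := by
  have hκ := S.curv s
  have h1 := S.ff_quot_right s (dfil_fst (γ := γ) s) (dfil_snd s) (S.dfil_lt s)
  have hlt : ∀ᶠ p in dfil γ s, tau ℓ γ σ p.1 p.2 < p.1 := by
    filter_upwards [dfil_pos s] with p hp using (S.tau_mem _ _ hp).2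
  have h2 := S.ff_quot_left s (dfil_fst (γ := γ) s) (S.tau_tendsto s) hlt
  have h3 := (h1.div h2 (by positivity)).sqrt
  rw [div_self (by positivity), Real.sqrt_one] at h3
  refine h3.congr' ?_
  filter_upwards [dfil_pos s, hlt, S.dfil_lt s] with p hp hl hl'
  have hq : 0 < (p.1 - tau ℓ γ σ p.1 p.2) / (p.2 - p.1) := div_pos (by linarith) (by linarith)
  rw [← Real.sqrt_sq hq.le]
  congr 1
  have hfne : ff γ p.1 p.2 - ff γ p.1 p.1 ≠ 0 := by
    have := (S.ff_mem _ _ hp).1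
    linarith
  have e1 : p.2 - p.1 ≠ 0 := by linarith
  have e2 : tau ℓ γ σ p.1 p.2 - p.1 ≠ 0 := by linarith
  simp only [Pi.div_apply]
  rw [S.ff_tau _ _ hp]
  field_simp
  ring

lemma L12_ratio (S : BSetup ℓ γ σ) (s : ℝ) :
    Tendsto (fun p : ℝ × ℝ => L12 γ (tau ℓ γ σ p.1 p.2) p.1 / L12 γ p.1 p.2) (dfil γ s) (𝓝 1) := by
  have hκ := S.curv s
  have hlt : ∀ᶠ p in dfil γ s, tau ℓ γ σ p.1 p.2 < p.1 := by
    filter_upwards [dfil_pos s] with p hp using (S.tau_mem _ _ hp).2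
  have h1 := S.L12_quot s (dfil_fst (γ := γ) s) (dfil_snd s) (S.dfil_lt s)
  have h2 := S.L12_quot s (S.tau_tendsto s) (dfil_fst (γ := γ) s) hlt
  have h3 := (h2.div h1 hκ.ne').mul (S.gap_ratio s)
  rw [div_self hκ.ne', mul_one] at h3
  refine h3.congr' ?_
  filter_upwards [dfil_pos s, hlt, S.dfil_lt s] with p hp hl hl'
  have e1 : p.2 - p.1 ≠ 0 := by linarith
  have e2 : p.1 - tau ℓ γ σ p.1 p.2 ≠ 0 := by linarith
  simp only [Pi.div_apply]
  field_simp

lemma A_ratio (S : BSetup ℓ γ σ) (s : ℝ) :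
    Tendsto (fun p : ℝ × ℝ => (- L11 γ p.1 p.2 - L22 γ (tau ℓ γ σ p.1 p.2) p.1) / L12 γ p.1 p.2)
      (dfil γ s) (𝓝 2) := by
  have hκ := S.curv s
  have hlt : ∀ᶠ p in dfil γ s, tau ℓ γ σ p.1 p.2 < p.1 := by
    filter_upwards [dfil_pos s] with p hp using (S.tau_mem _ _ hp).2
  have h1 := S.L12_quot s (dfil_fst (γ := γ) s) (dfil_snd s) (S.dfil_lt s)
  have g1 := quot_tendsto (S.hγ s) (dfil_fst (γ := γ) s) (dfil_snd s) (S.dfil_lt s)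
  have g2 := quot_tendsto (S.hγ s) (S.tau_tendsto s) (dfil_fst (γ := γ) s) hlt
  have g3 : Tendsto (fun p : ℝ × ℝ => deriv (deriv γ) p.1) (dfil γ s) (𝓝 (deriv (deriv γ) s)) :=
    (S.smooth2.continuous.tendsto s).comp (dfil_fst s)
  have g4 := (om_cont_tendsto g1 g3).add ((om_cont_tendsto g2 g3).mul (S.gap_ratio s))
  have g5 := g4.div h1 hκ.ne'
  rw [show (om (deriv γ s) (deriv (deriv γ) s) + om (deriv γ s) (deriv (deriv γ) s) * 1) /
    om (deriv γ s) (deriv (deriv γ) s) = 2 by field_simp; norm_num] at g5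
  refine g5.congr' ?_
  filter_upwards [dfil_pos s, hlt, S.dfil_lt s] with p hp hl hl'
  have e1 : p.2 - p.1 ≠ 0 := by linarith
  have e2 : p.1 - tau ℓ γ σ p.1 p.2 ≠ 0 := by linarith
  simp only [Pi.div_apply]
  rw [div_div_eq_mul_div]
  congr 1
  simp only [om, L11, L22, Prod.smul_fst, Prod.smul_snd, Prod.fst_sub, Prod.snd_sub, smul_eq_mul]
  field_simp
  ring

/-- Approximations of the Riccati solution. -/
noncomputable def W (ℓ : ℝ) (γ : ℝ → ℝ × ℝ) (σ : ℝ → ℝ) : ℕ → ℝ → ℝ → ℝ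
  | 0, b, c => L22 γ b c
  | n + 1, b, c => L22 γ b c + L12 γ b c ^ 2 / (- L11 γ b c - W ℓ γ σ n (tau ℓ γ σ b c) b)

/-- Denominators in the Riccati recursion. -/
noncomputable def DD (ℓ : ℝ) (γ : ℝ → ℝ × ℝ) (σ : ℝ → ℝ) (n : ℕ) (b c : ℝ) : ℝ :=
  - L11 γ b c - W ℓ γ σ n (tau ℓ γ σ b c) b

lemma W_succ (n : ℕ) (b c : ℝ) :
    W ℓ γ σ (n + 1) b c = L22 γ b c + L12 γ b c ^ 2 / DD ℓ γ σ n b c := rfl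

lemma D_limit (S : BSetup ℓ γ σ) (s : ℝ) (n : ℕ) :
    Tendsto (fun p : ℝ × ℝ => DD ℓ γ σ n p.1 p.2 / L12 γ p.1 p.2) (dfil γ s)
      (𝓝 (((n : ℝ) + 2) / (n + 1))) := by
  induction n with
  | zero => simpa [DD, W] using S.A_ratio s
  | succ n ih =>
    have hn : (0 : ℝ) < (n + 2) / (n + 1) := by positivity
    have h1 := (S.A_ratio s).sub ((S.L12_ratio s).div (ih.comp (S.T_tendsto s)) hn.ne')
    have e : (2 : ℝ) - 1 / ((n + 2) / (n + 1)) = ((n + 1 : ℕ) + 2) / ((n + 1 : ℕ) + 1) := by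
      push_cast; field_simp; ring
    rw [e] at h1
    refine h1.congr' ?_
    filter_upwards [dfil_pos s] with p hp
    have hp2 := S.tau_pos _ _ hp
    simp only [Function.comp, Pi.div_apply]
    rw [show DD ℓ γ σ (n + 1) p.1 p.2 = - L11 γ p.1 p.2 - W ℓ γ σ (n + 1) (tau ℓ γ σ p.1 p.2) p.1
      from rfl, W_succ]
    generalize DD ℓ γ σ n (tau ℓ γ σ p.1 p.2) p.1 = d
    by_cases hd : d = 0
    · subst hd; simp
    · field_simp; ring

lemma zseq {α : Type*} (R : α → α → Prop) (h1 : ∀ x, ∃ y, R x y) (h2 : ∀ y, ∃ x, R x y) (x0 : α) :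
    ∃ s : ℤ → α, s 0 = x0 ∧ ∀ n, R (s n) (s (n + 1)) := by
  choose f hf using h1
  choose g hg using h2
  let s : ℤ → α := fun n => match n with
    | Int.ofNat k => f^[k] x0
    | Int.negSucc k => g^[k + 1] x0
  refine ⟨s, rfl, fun n => ?_⟩
  cases n with
  | ofNat k =>
    have : s (Int.ofNat k + 1) = f (s (Int.ofNat k)) := by
      show f^[k + 1] x0 = f (f^[k] x0)
      exact Function.iterate_succ_apply' _ _ _
    rw [this]; exact hf _
  | negSucc k =>
    have : s (Int.negSucc k) = g (s (Int.negSucc k + 1)) := by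
      cases k with
      | zero => rfl
      | succ k =>
        show g^[k + 1 + 1] x0 = g (g^[k + 1] x0)
        exact Function.iterate_succ_apply' _ _ _
    rw [this]; exact hg _

lemma L12σ' (S : BSetup ℓ γ σ) (b : ℝ) : 0 ≤ L12 γ b (σ b) := by
  have hc : Continuous (L12 γ b) := S.cL12.comp (Continuous.prodMk_right b)
  refine ge_of_tendsto (hc.continuousWithinAt (s := Iio (σ b)) (x := σ b)).tendsto ?_
  filter_upwards [Ioo_mem_nhdsLT (S.ltσ b)] with x hx using (S.pos _ _ hx.1 hx.2).le

lemma right_to_left (S : BSetup ℓ γ σ) (b c : ℝ) (h : c ∈ Ioo b (σ b)) : b ∈ Ioo (σ c - ℓ) c := by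
  have h1 := S.pos b c h.1 h.2
  rw [L12_swap] at h1
  have h2 := S.σlt b
  refine ⟨?_, h.1⟩
  by_contra! hcon
  rcases hcon.lt_or_eq with h3 | h3
  · have := S.pos c (b + ℓ) (by linarith [h.2]) (by linarith)
    rw [S.pL12r] at this; linarith
  · have := S.L12σ' c
    rw [← S.pL12r, show b + ℓ = σ c by linarith] at h1; linarith

lemma left_to_right (S : BSetup ℓ γ σ) (a b : ℝ) (h : a ∈ Ioo (σ b - ℓ) b) : b ∈ Ioo a (σ a) := by
  have h1 := S.L12_left b a h
  have h2 := S.ltσ b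
  refine ⟨h.2, ?_⟩
  by_contra! hcon
  rcases hcon.lt_or_eq with h3 | h3
  · have := S.neg a b h3 (by linarith [h.1])
    linarith
  · have := S.L12σ a
    rw [h3] at this; linarith

/-- Existence of an orbit carrying a Jacobi field with prescribed initial data. -/
lemma exists_orbit (S : BSetup ℓ γ σ) (b c u v : ℝ) (h : b ∈ Ioo (σ c - ℓ) c) :
    ∃ t ξ : ℤ → ℝ, t 0 = b ∧ t 1 = c ∧ ξ 0 = u ∧ ξ 1 = v ∧ (∀ n, t n ∈ Ioo (σ (t (n+1)) - ℓ) (t (n+1)))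
      ∧ (∀ n, ff γ (t n) (t (n + 1)) = ff γ (t n) (t (n - 1))) ∧ IsJacobiField γ t ξ := by
  let X := {p : ℝ × ℝ × ℝ × ℝ // p.1 ∈ Ioo (σ p.2.1 - ℓ) p.2.1}
  let R : X → X → Prop := fun x y => y.1.1 = x.1.2.1 ∧ y.1.2.2.1 = x.1.2.2.2 ∧
    ff γ x.1.2.1 y.1.2.1 = ff γ x.1.2.1 x.1.1 ∧
    L12 γ x.1.1 x.1.2.1 * x.1.2.2.1 + (L22 γ x.1.1 x.1.2.1 + L11 γ x.1.2.1 y.1.2.1) * x.1.2.2.2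
      + L12 γ x.1.2.1 y.1.2.1 * y.1.2.2.2 = 0
  have h1 : ∀ x, ∃ y, R x y := by
    rintro ⟨⟨a, b, u, v⟩, hx⟩
    obtain ⟨c, hc, e⟩ := S.exists_right b _ (S.ff_mem_left b a hx)
    have hp := S.pos b c hc.1 hc.2
    refine ⟨⟨⟨b, c, v, -(L12 γ a b * u + (L22 γ a b + L11 γ b c) * v) / L12 γ b c⟩,
      S.right_to_left b c hc⟩, rfl, rfl, e, ?_⟩
    show L12 γ a b * u + (L22 γ a b + L11 γ b c) * v
      + L12 γ b c * (-(L12 γ a b * u + (L22 γ a b + L11 γ b c) * v) / L12 γ b c) = 0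
    field_simp; ring
  have h2 : ∀ y, ∃ x, R x y := by
    rintro ⟨⟨b, c, u, v⟩, hx⟩
    have hp := S.L12_left c b hx
    have hm := S.tau_mem b c hp
    have hp2 := S.tau_pos b c hp
    refine ⟨⟨⟨tau ℓ γ σ b c, b, -(L12 γ b c * v + (L22 γ (tau ℓ γ σ b c) b + L11 γ b c) * u)
      / L12 γ (tau ℓ γ σ b c) b, u⟩, hm⟩, rfl, rfl, (S.ff_tau b c hp).symm, ?_⟩
    simp only
    field_simp; ring
  obtain ⟨s, hs0, hs⟩ := zseq R h1 h2 ⟨⟨b, c, u, v⟩, h⟩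
  have ht : ∀ n, (s (n + 1)).1.1 = (s n).1.2.1 := fun n => (hs n).1
  have hξ : ∀ n, (s (n + 1)).1.2.2.1 = (s n).1.2.2.2 := fun n => (hs n).2.1
  refine ⟨fun n => (s n).1.1, fun n => (s n).1.2.2.1, by simp [hs0], ?_, by simp [hs0], ?_, ?_, ?_, ?_⟩
  · have := ht 0; simp [hs0] at this; exact this
  · have := hξ 0; simp [hs0] at this; exact this
  · intro n
    simp only [ht]; exact (s n).2
  · intro n
    have := (hs (n - 1)).2.2.1
    rw [← ht, ← ht, sub_add_cancel] at this
    exact this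
  · intro n
    have := (hs (n - 1)).2.2.2
    rw [← ht, ← ht, ← hξ, ← hξ, sub_add_cancel] at this
    exact this

lemma field_vanish (S : BSetup ℓ γ σ) (t ξ : ℤ → ℝ)
    (ht : ∀ n, t n ∈ Ioo (σ (t (n+1)) - ℓ) (t (n+1)))
    (hf : ∀ n, ff γ (t n) (t (n + 1)) = ff γ (t n) (t (n - 1))) (hJ : IsJacobiField γ t ξ) (m : ℕ) :
    ∀ j : ℤ, (∀ k < m, ∀ b c, 0 < L12 γ b c → 0 < DD ℓ γ σ k b c) →
      DD ℓ γ σ m (t j) (t (j + 1)) * ξ j = L12 γ (t j) (t (j + 1)) * ξ (j + 1) →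
      ξ (j - m - 1) = 0 := by
  induction m with
  | zero =>
    intro j _ h
    have h0 := ht (j - 1)
    rw [sub_add_cancel] at h0
    have htau := S.tau_unique _ (t (j + 1)) _ h0 (hf j).symm
    have hp := S.L12_left _ _ h0
    have hj := hJ j
    rw [DD, htau, W] at h
    have : L12 γ (t (j - 1)) (t j) * ξ (j - 1) = 0 := by linarith
    rcases mul_eq_zero.1 this with h3 | h3
    · exact absurd h3 hp.ne'
    · simpa using h3
  | succ m ih =>
    intro j hk h
    have h0 := ht (j - 1)
    rw [sub_add_cancel] at h0
    have htau := S.tau_unique _ (t (j + 1)) _ h0 (hf j).symm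
    have hp := S.L12_left _ _ h0
    have hj := hJ j
    rw [DD, htau, W_succ] at h
    have hD := hk m (Nat.lt_succ_self m) _ _ hp
    have := ih (j - 1) (fun k hk' => hk k (by omega)) (by
      rw [sub_add_cancel]
      generalize DD ℓ γ σ m (t (j - 1)) (t j) = d at *
      generalize L12 γ (t (j - 1)) (t j) = l at *
      have : l * (d * ξ (j - 1)) = l * (l * ξ j) := by
        have e : l * ξ (j - 1) = l ^ 2 / d * ξ j := by linarith
        calc l * (d * ξ (j - 1)) = d * (l * ξ (j - 1)) := by ring
          _ = l * (l * ξ j) := by rw [e]; field_simp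
      exact mul_left_cancel₀ hp.ne' this)
    rw [← this]; congr 1; push_cast; ring

/-- Absence of conjugate points. -/
def NoConj (γ : ℝ → ℝ × ℝ) : Prop := ∀ t : ℤ → ℝ, IsConfiguration γ t →
      ∀ ξ : ℤ → ℝ, IsJacobiField γ t ξ → ξ ≠ 0 →
        ¬ ∃ M N : ℤ, M < N ∧ ξ M = 0 ∧ ξ N = 0

lemma D_ne (S : BSetup ℓ γ σ) (hn : NoConj γ) (m : ℕ)
    (hk : ∀ k < m, ∀ b c, 0 < L12 γ b c → 0 < DD ℓ γ σ k b c) (b c : ℝ) (h : c ∈ Ioo b (σ b)) :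
    DD ℓ γ σ m b c ≠ 0 := by
  intro h0
  obtain ⟨t, ξ, t0, t1, ξ0, ξ1, ht, hf, hJ⟩ := S.exists_orbit b c 1 0 (S.right_to_left b c h)
  have hv := S.field_vanish t ξ ht hf hJ m 0 hk (by simp [t0, t1, ξ0, ξ1, h0])
  refine hn t ⟨fun n => S.L12_left _ _ (ht n), fun n => ?_⟩ ξ hJ (fun h => ?_)
    ⟨0 - m - 1, 1, by omega, hv, ξ1⟩
  · have := hf n
    simp only [ff, om, Prod.fst_sub, Prod.snd_sub] at this ⊢
    linarith
  · rw [h] at ξ0; simp at ξ0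

lemma pL11r (S : BSetup ℓ γ σ) (b c : ℝ) : L11 γ b (c + ℓ) = L11 γ b c := by simp [L11, S.per]
lemma pL11l (S : BSetup ℓ γ σ) (b c : ℝ) : L11 γ (b + ℓ) c = L11 γ b c := by simp [L11, S.pk]
lemma pL22r (S : BSetup ℓ γ σ) (b c : ℝ) : L22 γ b (c + ℓ) = L22 γ b c := by simp [L22, S.pk]
lemma pL22l (S : BSetup ℓ γ σ) (b c : ℝ) : L22 γ (b + ℓ) c = L22 γ b c := by simp [L22, S.per]
lemma pL12l (S : BSetup ℓ γ σ) (b c : ℝ) : L12 γ (b + ℓ) c = L12 γ b c := by simp [L12, S.pv]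

lemma D_perc (S : BSetup ℓ γ σ) (n : ℕ) (b c : ℝ) : DD ℓ γ σ n b (c + ℓ) = DD ℓ γ σ n b c := by
  simp only [DD, S.tau_perc, S.pL11r]

lemma W_perc (S : BSetup ℓ γ σ) (n : ℕ) (b c : ℝ) : W ℓ γ σ n b (c + ℓ) = W ℓ γ σ n b c := by
  cases n with
  | zero => exact S.pL22r b c
  | succ n => rw [W_succ, W_succ, S.D_perc, S.pL22r, S.pL12r]

lemma W_perb (S : BSetup ℓ γ σ) (n : ℕ) : ∀ b c : ℝ, 0 < L12 γ b c →
    W ℓ γ σ n (b + ℓ) c = W ℓ γ σ n b c := by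
  induction n with
  | zero => intro b c _; exact S.pL22l b c
  | succ n ih =>
    intro b c h
    rw [W_succ, W_succ, S.pL22l, S.pL12l, DD, DD, S.tau_perb _ _ h, S.pL11l, S.W_perc,
      ih _ _ (S.tau_pos _ _ h)]

lemma D_cont (S : BSetup ℓ γ σ) (n : ℕ)
    (h : ContinuousOn (fun p : ℝ × ℝ => W ℓ γ σ n p.1 p.2) {p | 0 < L12 γ p.1 p.2}) :
    ContinuousOn (fun p : ℝ × ℝ => DD ℓ γ σ n p.1 p.2) {p | 0 < L12 γ p.1 p.2} := by
  refine S.cL11.continuousOn.neg.sub ?_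
  refine h.comp (f := fun p : ℝ × ℝ => (tau ℓ γ σ p.1 p.2, p.1)) ?_ ?_
  · exact S.tau_cont.prodMk continuousOn_fst
  · intro p hp; exact S.tau_pos _ _ hp

lemma D_pos_step (S : BSetup ℓ γ σ) (hn : NoConj γ) (n : ℕ)
    (hk : ∀ k < n, ∀ b c, 0 < L12 γ b c → 0 < DD ℓ γ σ k b c)
    (h : ContinuousOn (fun p : ℝ × ℝ => W ℓ γ σ n p.1 p.2) {p | 0 < L12 γ p.1 p.2}) (b c : ℝ)
    (hbc : 0 < L12 γ b c) : 0 < DD ℓ γ σ n b c := by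
  obtain ⟨m, hm⟩ := S.reduce b c hbc
  have hper : Function.Periodic (DD ℓ γ σ n b) ℓ := S.D_perc n b
  rw [← hper.zsmul m c]
  set c' := c + m • ℓ
  have hg : ContinuousOn (DD ℓ γ σ n b) (Ioo b (σ b)) := by
    refine (S.D_cont n h).comp (f := fun c => (b, c)) (by fun_prop) ?_
    intro x hx; exact S.pos _ _ hx.1 hx.2
  have hT : Tendsto (fun c => (b, c)) (𝓝[>] b) (dfil γ b) := by
    refine tendsto_nhdsWithin_iff.2 ⟨?_, ?_⟩
    · exact ((Continuous.prodMk_right b).tendsto b).mono_left inf_le_left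
    · filter_upwards [Ioo_mem_nhdsGT (S.ltσ b)] with x hx using S.pos _ _ hx.1 hx.2
  have hlim := (S.D_limit b n).comp hT
  have hpos : (0 : ℝ) < (n + 2) / (n + 1) := by positivity
  obtain ⟨c0, h0, h1⟩ := ((hlim.eventually (lt_mem_nhds hpos)).and
    (Ioo_mem_nhdsGT (S.ltσ b))).exists
  have h2 : 0 < DD ℓ γ σ n b c0 := by
    have hp := S.pos _ _ h1.1 h1.2
    have h0' : 0 < DD ℓ γ σ n b c0 / L12 γ b c0 := h0
    have := mul_pos h0' hp
    rwa [div_mul_cancel₀ _ hp.ne'] at this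
  by_contra! hcon
  obtain ⟨x, hx, e⟩ := isPreconnected_Ioo.intermediate_value hm h1 hg ⟨hcon, h2.le⟩
  exact S.D_ne hn n hk b x hx e

lemma W_cont_aux (S : BSetup ℓ γ σ) (hn : NoConj γ) (n : ℕ) :
    ContinuousOn (fun p : ℝ × ℝ => W ℓ γ σ n p.1 p.2) {p | 0 < L12 γ p.1 p.2} ∧
    ∀ k < n, ∀ b c, 0 < L12 γ b c → 0 < DD ℓ γ σ k b c := by
  induction n with
  | zero => exact ⟨S.cL22.continuousOn, by simp⟩
  | succ n ih =>
    have hD := S.D_pos_step hn n ih.2 ih.1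
    refine ⟨?_, ?_⟩
    · refine S.cL22.continuousOn.add ((S.cL12.continuousOn.pow 2).div (S.D_cont n ih.1) ?_)
      intro p hp; exact (hD _ _ hp).ne'
    · intro k hk
      rcases Nat.lt_succ_iff_lt_or_eq.1 hk with h | h
      · exact ih.2 k h
      · rw [h]; exact hD

lemma W_cont (S : BSetup ℓ γ σ) (hn : NoConj γ) (n : ℕ) :
    ContinuousOn (fun p : ℝ × ℝ => W ℓ γ σ n p.1 p.2) {p | 0 < L12 γ p.1 p.2} :=
  (S.W_cont_aux hn n).1

lemma D_pos (S : BSetup ℓ γ σ) (hn : NoConj γ) (n : ℕ) (b c : ℝ) (h : 0 < L12 γ b c) :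
    0 < DD ℓ γ σ n b c := (S.W_cont_aux hn (n + 1)).2 n (Nat.lt_succ_self n) b c h

lemma om_le (u v : ℝ × ℝ) : |om u v| ≤ 2 * (‖u‖ * ‖v‖) := by
  have h1 := norm_fst_le u
  have h2 := norm_snd_le u
  have h3 := norm_fst_le v
  have h4 := norm_snd_le v
  rw [Real.norm_eq_abs] at h1 h2 h3 h4
  have e1 : |u.1 * v.2| ≤ ‖u‖ * ‖v‖ := by rw [abs_mul]; gcongr
  have e2 : |v.1 * u.2| ≤ ‖u‖ * ‖v‖ := by rw [abs_mul, mul_comm]; gcongr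
  unfold om
  have := abs_sub (u.1 * v.2) (v.1 * u.2)
  linarith

lemma bounded (S : BSetup ℓ γ σ) : ∃ C : ℝ, 0 ≤ C ∧ ∀ b c, |L11 γ b c| ≤ C ∧ |L22 γ b c| ≤ C ∧
    |L12 γ b c| ≤ C := by
  have hb : ∀ f : ℝ → ℝ × ℝ, Continuous f → (∀ t, f (t + ℓ) = f t) → ∃ C, ∀ t, ‖f t‖ ≤ C := by
    intro f hf hp
    obtain ⟨C, hC⟩ := (Function.Periodic.isBounded_of_continuous (f := f) hp S.hℓ.ne' hf).exists_norm_le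
    exact ⟨C, fun t => hC _ ⟨t, rfl⟩⟩
  obtain ⟨C0, h0⟩ := hb γ S.smooth.continuous S.per
  obtain ⟨C1, h1⟩ := hb _ S.smooth1.continuous S.pv
  obtain ⟨C2, h2⟩ := hb _ S.smooth2.continuous S.pk
  have p0 := (norm_nonneg _).trans (h0 0)
  have p1 := (norm_nonneg _).trans (h1 0)
  have p2 := (norm_nonneg _).trans (h2 0)
  refine ⟨2 * ((C0 + C1 + C2) * (C0 + C1 + C2)), by positivity, fun b c => ⟨?_, ?_, ?_⟩⟩
  · refine (om_le _ _).trans ?_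
    have := h2 b; have := h0 c
    gcongr <;> linarith
  · refine (om_le _ _).trans ?_
    have := h2 c; have := h0 b
    gcongr <;> linarith
  · refine (om_le _ _).trans ?_
    have := h1 c; have := h1 b
    gcongr <;> linarith

lemma W_lower (S : BSetup ℓ γ σ) (hn : NoConj γ) (n : ℕ) (b c : ℝ) (h : 0 < L12 γ b c) :
    L22 γ b c ≤ W ℓ γ σ n b c := by
  cases n with
  | zero => exact le_rfl
  | succ n =>
    rw [W_succ]
    have := S.D_pos hn n b c h
    have : 0 ≤ L12 γ b c ^ 2 / DD ℓ γ σ n b c := by positivity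
    linarith

lemma W_upper (S : BSetup ℓ γ σ) (hn : NoConj γ) (n : ℕ) (a b : ℝ) (h : 0 < L12 γ a b) :
    ∃ b' c, W ℓ γ σ n a b < - L11 γ b' c := by
  obtain ⟨m, hm⟩ := S.reduce a b h
  have hper : Function.Periodic (W ℓ γ σ n a) ℓ := S.W_perc n a
  rw [← hper.zsmul m b]
  set b' := b + m • ℓ
  have hl := S.right_to_left _ _ hm
  obtain ⟨c, hc, e⟩ := S.exists_right b' _ (S.ff_mem_left b' a hl)
  have ht := S.tau_unique b' c a hl e.symm
  have := S.D_pos hn n b' c (S.pos _ _ hc.1 hc.2)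
  rw [DD, ht] at this
  exact ⟨b', c, by linarith⟩

lemma W_bounded (S : BSetup ℓ γ σ) (hn : NoConj γ) : ∃ C : ℝ, 0 ≤ C ∧ ∀ n b c, 0 < L12 γ b c →
    |W ℓ γ σ n b c| ≤ C ∧ |L12 γ b c| ≤ C := by
  obtain ⟨C, hC0, hC⟩ := S.bounded
  refine ⟨C, hC0, fun n b c h => ⟨abs_le.2 ⟨?_, ?_⟩, (hC b c).2.2⟩⟩
  · have := S.W_lower hn n b c h
    have := (abs_le.1 (hC b c).2.1).1
    linarith
  · obtain ⟨b', c', h'⟩ := S.W_upper hn n b c h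
    have := (abs_le.1 (hC b' c').1).1
    linarith

lemma W_ineq (S : BSetup ℓ γ σ) (hn : NoConj γ) (n : ℕ) (b c : ℝ) (h : 0 < L12 γ b c) :
    L11 γ b c + 2 * L12 γ b c + L22 γ b c + W ℓ γ σ n (tau ℓ γ σ b c) b ≤ W ℓ γ σ (n + 1) b c := by
  have hD := S.D_pos hn n b c h
  rw [W_succ]
  have e : W ℓ γ σ n (tau ℓ γ σ b c) b = - L11 γ b c - DD ℓ γ σ n b c := by rw [DD]; ring
  rw [e]
  have : 2 * L12 γ b c - DD ℓ γ σ n b c ≤ L12 γ b c ^ 2 / DD ℓ γ σ n b c := by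
    rw [le_div_iff₀ hD]
    nlinarith [sq_nonneg (L12 γ b c - DD ℓ γ σ n b c)]
  linarith

/-- The open phase space. -/
def Om (γ : ℝ → ℝ × ℝ) : Set (ℝ × ℝ) := {p | 0 < L12 γ p.1 p.2}

/-- The fundamental domain of the phase space. -/
def SS (ℓ : ℝ) (γ : ℝ → ℝ × ℝ) : Set (ℝ × ℝ) := (Icc 0 ℓ ×ˢ Icc 0 ℓ) ∩ Om γ

lemma Om_meas (S : BSetup ℓ γ σ) : MeasurableSet (Om γ) :=
  (isOpen_lt continuous_const S.cL12).measurableSet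

lemma SS_meas (S : BSetup ℓ γ σ) : MeasurableSet (SS ℓ γ) :=
  (measurableSet_Icc.prod measurableSet_Icc).inter S.Om_meas

lemma SS_fin (ℓ : ℝ) (γ : ℝ → ℝ × ℝ) : volume (SS ℓ γ) < ⊤ :=
  lt_of_le_of_lt (measure_mono inter_subset_left) (isCompact_Icc.prod isCompact_Icc).measure_lt_top

lemma int_SS (S : BSetup ℓ γ σ) (F : ℝ × ℝ → ℝ) (hF : ContinuousOn F (Om γ)) (C : ℝ)
    (hC : ∀ p ∈ Om γ, |F p| ≤ C) : IntegrableOn F (SS ℓ γ) := by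
  have : IsFiniteMeasure (volume.restrict (SS ℓ γ)) := ⟨by simpa using SS_fin ℓ γ⟩
  refine Integrable.of_bound ((hF.mono inter_subset_right).aestronglyMeasurable S.SS_meas) C ?_
  exact (ae_restrict_iff' S.SS_meas).2 (Eventually.of_forall fun p hp => hC p hp.2)

lemma shift_int (S : BSetup ℓ γ σ) (f : ℝ → ℝ) (hf : Function.Periodic f ℓ) (x : ℝ) :
    ∫ c in Icc 0 ℓ, f c = ∫ c in Ioc x (x + ℓ), f c := by
  have := hf.intervalIntegral_add_eq 0 x
  rw [zero_add, intervalIntegral.integral_of_le S.hℓ.le,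
    intervalIntegral.integral_of_le (by linarith [S.hℓ])] at this
  rw [integral_Icc_eq_integral_Ioc, this]

lemma L12_self (b : ℝ) : L12 γ b b = 0 := by simp [L12, om]

lemma image_right (S : BSetup ℓ γ σ) (b : ℝ) :
    ff γ b '' Ioo b (σ b) = Ioo (ff γ b b) (ff γ b (σ b)) := by
  ext y; constructor
  · rintro ⟨c, hc, rfl⟩; exact S.ff_mem_right b c hc
  · intro hy; exact S.exists_right b y hy

lemma image_left (S : BSetup ℓ γ σ) (b : ℝ) :
    ff γ b '' Ioo (σ b - ℓ) b = Ioo (ff γ b b) (ff γ b (σ b)) := by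
  ext y; constructor
  · rintro ⟨c, hc, rfl⟩; exact S.ff_mem_left b c hc
  · intro hy; exact S.exists_left b y hy

lemma fiber_right (S : BSetup ℓ γ σ) (G : ℝ → ℝ → ℝ) (b : ℝ) :
    ∫ c in Icc 0 ℓ, (Om γ).indicator (fun p => G (tau ℓ γ σ p.1 p.2) p.1 * L12 γ p.1 p.2) (b, c)
      = ∫ y in Ioo (ff γ b b) (ff γ b (σ b)), G (binv ℓ γ σ b y) b := by
  classical
  rw [S.shift_int _ ?_ b]
  · have e : ∀ c ∈ Ioc b (b + ℓ), (Om γ).indicator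
        (fun p => G (tau ℓ γ σ p.1 p.2) p.1 * L12 γ p.1 p.2) (b, c)
        = (Ioo b (σ b)).indicator (fun c => |L12 γ b c| • G (binv ℓ γ σ b (ff γ b c)) b) c := by
      intro c hc
      by_cases h : c ∈ Ioo b (σ b)
      · have hp := S.pos b c h.1 h.2
        rw [indicator_of_mem h, indicator_of_mem (show (b, c) ∈ Om γ from hp), abs_of_pos hp,
          smul_eq_mul, mul_comm]
        rfl
      · rw [indicator_of_notMem h, indicator_of_notMem]
        intro hp
        have hp' : 0 < L12 γ b c := hp
        have h1 : σ b ≤ c := by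
          by_contra! h2; exact h ⟨hc.1, h2⟩
        rcases h1.lt_or_eq with h2 | h2
        · rcases hc.2.lt_or_eq with h3 | h3
          · linarith [S.neg b c h2 h3]
          · rw [h3, S.pL12r, L12_self] at hp'; exact lt_irrefl _ hp'
        · have := S.L12σ b
          rw [h2] at this; linarith
    rw [setIntegral_congr_fun measurableSet_Ioc e, setIntegral_indicator measurableSet_Ioo,
      inter_eq_self_of_subset_right (show Ioo b (σ b) ⊆ Ioc b (b + ℓ) from
        fun c hc => ⟨hc.1, (hc.2.trans (S.σlt b)).le⟩),
      ← integral_image_eq_integral_abs_deriv_smul measurableSet_Ioo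
        (fun x _ => (S.dff b x).hasDerivWithinAt)
        ((S.ffmono b).injOn.mono Ioo_subset_Icc_self) (fun y => G (binv ℓ γ σ b y) b),
      S.image_right]
  · intro c
    beta_reduce
    by_cases h : 0 < L12 γ b c
    · have h' : 0 < L12 γ b (c + ℓ) := by rwa [S.pL12r]
      rw [indicator_of_mem (show (b, c) ∈ Om γ from h),
        indicator_of_mem (show (b, c + ℓ) ∈ Om γ from h')]
      simp only [S.pL12r, S.tau_perc]
    · have h' : ¬ 0 < L12 γ b (c + ℓ) := by rwa [S.pL12r]
      rw [indicator_of_notMem (show (b, c) ∉ Om γ from h),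
        indicator_of_notMem (show (b, c + ℓ) ∉ Om γ from h')]

lemma fiber_left (S : BSetup ℓ γ σ) (G : ℝ → ℝ → ℝ) (b : ℝ)
    (hG : ∀ a b, 0 < L12 γ a b → G (a + ℓ) b = G a b) :
    ∫ a in Icc 0 ℓ, (Om γ).indicator (fun p => G p.1 p.2 * L12 γ p.1 p.2) (a, b)
      = ∫ y in Ioo (ff γ b b) (ff γ b (σ b)), G (binv ℓ γ σ b y) b := by
  classical
  rw [S.shift_int _ ?_ (b - ℓ)]
  · have e : ∀ a ∈ Ioc (b - ℓ) (b - ℓ + ℓ), (Om γ).indicator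
        (fun p => G p.1 p.2 * L12 γ p.1 p.2) (a, b)
        = (Ioo (σ b - ℓ) b).indicator (fun a => |L12 γ b a| • G (binv ℓ γ σ b (ff γ b a)) b) a := by
      intro a ha
      rw [sub_add_cancel] at ha
      by_cases h : a ∈ Ioo (σ b - ℓ) b
      · have hp := S.L12_left b a h
        have hn := S.neg' b a h.1 h.2
        rw [indicator_of_mem h, indicator_of_mem (show (a, b) ∈ Om γ from hp), abs_of_neg hn,
          smul_eq_mul, mul_comm, S.binv_unique b a h, ← L12_swap]
      · rw [indicator_of_notMem h, indicator_of_notMem]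
        intro hp
        have hp' : 0 < L12 γ a b := hp
        rcases ha.2.lt_or_eq with h3 | h3
        · have h1 : a + ℓ ≤ σ b := by
            by_contra! h2; exact h ⟨by linarith, h3⟩
          rw [L12_swap, ← S.pL12r] at hp'
          rcases h1.lt_or_eq with h2 | h2
          · linarith [S.pos b (a + ℓ) (by linarith [ha.1]) h2]
          · have := S.L12σ' b
            rw [h2] at hp'; linarith
        · rw [h3, L12_self] at hp'; exact lt_irrefl _ hp'
    rw [setIntegral_congr_fun measurableSet_Ioc e, setIntegral_indicator measurableSet_Ioo,
      inter_eq_self_of_subset_right (show Ioo (σ b - ℓ) b ⊆ Ioc (b - ℓ) (b - ℓ + ℓ) from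
        fun c hc => ⟨by linarith [hc.1, S.ltσ b], by
        linarith [hc.2]⟩),
      ← integral_image_eq_integral_abs_deriv_smul measurableSet_Ioo
        (fun x _ => (S.dff b x).hasDerivWithinAt)
        ((S.ffanti b).injOn.mono Ioo_subset_Icc_self) (fun y => G (binv ℓ γ σ b y) b),
      S.image_left]
  · intro a
    beta_reduce
    by_cases h : 0 < L12 γ a b
    · have h' : 0 < L12 γ (a + ℓ) b := by rwa [S.pL12l]
      rw [indicator_of_mem (show (a, b) ∈ Om γ from h),
        indicator_of_mem (show (a + ℓ, b) ∈ Om γ from h')]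
      simp only [S.pL12l, hG a b h]
    · have hneg : ¬ 0 < L12 γ (a + ℓ) b := by rwa [S.pL12l]
      rw [indicator_of_notMem (show (a, b) ∉ Om γ from h),
        indicator_of_notMem (show (a + ℓ, b) ∉ Om γ from hneg)]

/-- Invariance of the measure `L12 da db` under the billiard map. -/
lemma invariance (S : BSetup ℓ γ σ) (G : ℝ → ℝ → ℝ)
    (hG : ∀ a b, 0 < L12 γ a b → G (a + ℓ) b = G a b)
    (h1 : IntegrableOn (fun p : ℝ × ℝ => G (tau ℓ γ σ p.1 p.2) p.1 * L12 γ p.1 p.2) (SS ℓ γ))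
    (h2 : IntegrableOn (fun p : ℝ × ℝ => G p.1 p.2 * L12 γ p.1 p.2) (SS ℓ γ)) :
    ∫ p in SS ℓ γ, G (tau ℓ γ σ p.1 p.2) p.1 * L12 γ p.1 p.2
      = ∫ p in SS ℓ γ, G p.1 p.2 * L12 γ p.1 p.2 := by
  rw [SS, inter_comm] at h1 h2
  have i1 := (integrableOn_indicator_iff S.Om_meas).2 h1
  have i2 := (integrableOn_indicator_iff S.Om_meas).2 h2
  rw [SS, ← setIntegral_indicator S.Om_meas, ← setIntegral_indicator S.Om_meas]
  rw [Measure.volume_eq_prod] at i1 i2 ⊢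
  rw [setIntegral_prod _ i1, ← setIntegral_prod_swap]
  refine Eq.trans ?_ (setIntegral_prod _ i2.swap).symm
  refine setIntegral_congr_fun measurableSet_Icc fun b _ => ?_
  exact (S.fiber_right G b).trans (S.fiber_left G b hG).symm

lemma final (S : BSetup ℓ γ σ) (hn : NoConj γ) :
    ∫ p in SS ℓ γ, (L11 γ p.1 p.2 + 2 * L12 γ p.1 p.2 + L22 γ p.1 p.2) * L12 γ p.1 p.2 ≤ 0 := by
  obtain ⟨C, hC0, hC⟩ := S.W_bounded hn
  obtain ⟨B, hB0, hB⟩ := S.bounded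
  set J := ∫ p in SS ℓ γ, (L11 γ p.1 p.2 + 2 * L12 γ p.1 p.2 + L22 γ p.1 p.2) * L12 γ p.1 p.2
    with hJ
  let I : ℕ → ℝ := fun n => ∫ p in SS ℓ γ, W ℓ γ σ n p.1 p.2 * L12 γ p.1 p.2
  have cF : IntegrableOn (fun p : ℝ × ℝ =>
      (L11 γ p.1 p.2 + 2 * L12 γ p.1 p.2 + L22 γ p.1 p.2) * L12 γ p.1 p.2) (SS ℓ γ) := by
    refine S.int_SS _ ?_ ((4 * B) * B) ?_
    · have a := S.cL11; have b := S.cL12; have c := S.cL22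
      exact Continuous.continuousOn (by fun_prop)
    · intro p hp
      obtain ⟨b1, b2, b3⟩ := hB p.1 p.2
      rw [abs_mul]
      have : |L11 γ p.1 p.2 + 2 * L12 γ p.1 p.2 + L22 γ p.1 p.2| ≤ 4 * B := by
        rw [abs_le] at *
        constructor <;> linarith [b1.1, b1.2, b2.1, b2.2, b3.1, b3.2]
      gcongr
  have cW : ∀ n, IntegrableOn (fun p : ℝ × ℝ => W ℓ γ σ n p.1 p.2 * L12 γ p.1 p.2) (SS ℓ γ) := by
    intro n
    refine S.int_SS _ ((S.W_cont hn n).mul S.cL12.continuousOn) (C * C) ?_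
    intro p hp
    obtain ⟨b1, b2⟩ := hC n _ _ hp
    rw [abs_mul]; gcongr
  have cT : ∀ n, IntegrableOn (fun p : ℝ × ℝ =>
      W ℓ γ σ n (tau ℓ γ σ p.1 p.2) p.1 * L12 γ p.1 p.2) (SS ℓ γ) := by
    intro n
    refine S.int_SS _ (ContinuousOn.mul ?_ S.cL12.continuousOn) (C * C) ?_
    · refine (S.W_cont hn n).comp (f := fun p : ℝ × ℝ => (tau ℓ γ σ p.1 p.2, p.1)) ?_ ?_
      · exact S.tau_cont.prodMk continuousOn_fst
      · intro p hp; exact S.tau_pos _ _ hp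
    · intro p hp
      have b1 := (hC n _ _ (S.tau_pos _ _ hp)).1
      have b2 := (hC n _ _ hp).2
      rw [abs_mul]; gcongr
  have step : ∀ n, J + I n ≤ I (n + 1) := by
    intro n
    have e := S.invariance (W ℓ γ σ n) (S.W_perb n) (cT n) (cW n)
    show J + (∫ p in SS ℓ γ, W ℓ γ σ n p.1 p.2 * L12 γ p.1 p.2) ≤ _
    rw [← e, hJ, ← integral_add cF (cT n)]
    refine setIntegral_mono_on (cF.add (cT n)) (cW (n + 1)) S.SS_meas ?_
    intro p hp
    have hp' : 0 < L12 γ p.1 p.2 := hp.2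
    have := mul_le_mul_of_nonneg_right (S.W_ineq hn n _ _ hp') hp'.le
    beta_reduce
    linarith
  have grow : ∀ n : ℕ, n * J + I 0 ≤ I n := by
    intro n
    induction n with
    | zero => simp
    | succ n ih => push_cast; linarith [step n]
  have bd : ∀ n, |I n| ≤ C * C * volume.real (SS ℓ γ) := by
    intro n
    rw [← Real.norm_eq_abs]
    refine norm_setIntegral_le_of_norm_le_const (SS_fin ℓ γ) ?_
    intro p hp
    obtain ⟨b1, b2⟩ := hC n _ _ hp.2
    rw [Real.norm_eq_abs, abs_mul]; gcongr
  by_contra! hpos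
  obtain ⟨n, hn⟩ := exists_nat_gt (2 * (C * C * volume.real (SS ℓ γ)) / J)
  rw [div_lt_iff₀ hpos] at hn
  have g := grow n
  have q1 := (abs_le.1 (bd n)).2
  have q2 := (abs_le.1 (bd 0)).1
  linarith

end BSetup

/-- Bialy's inequality for symplectic billiards without conjugate points. -/
theorem bialy_inequality_for_symplectic_billiards
    (ℓ : ℝ) (hℓ : 0 < ℓ) (γ : ℝ → ℝ × ℝ)
    (hsmooth : ContDiff ℝ (⊤ : ℕ∞) γ)
    (hper : ∀ t, γ (t + ℓ) = γ t)
    (hinj : InjOn γ (Ico 0 ℓ))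
    (hcurv : ∀ t, 0 < om (deriv γ t) (deriv (deriv γ) t))
    (hnoconj : ∀ t : ℤ → ℝ, IsConfiguration γ t →
      ∀ ξ : ℤ → ℝ, IsJacobiField γ t ξ → ξ ≠ 0 →
        ¬ ∃ M N : ℤ, M < N ∧ ξ M = 0 ∧ ξ N = 0) :
    ∫ q in {q : ℝ × ℝ | q.1 ∈ Icc 0 ℓ ∧ q.2 ∈ Icc 0 ℓ ∧
        0 < om (deriv γ q.1) (deriv γ q.2)},
      (L11 γ q.1 q.2 + 2 * L12 γ q.1 q.2 + L22 γ q.1 q.2) * L12 γ q.1 q.2 ≤ 0 := by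
  obtain ⟨σ, h1, h2, h3, h4, h5, h6⟩ := exists_sigma ℓ hℓ γ hsmooth hper hinj hcurv
  have S : BSetup ℓ γ σ := ⟨hℓ, hsmooth, hper, hcurv, h1, h2, h3, h4, h5, h6⟩
  have h := S.final hnoconj
  have e : {q : ℝ × ℝ | q.1 ∈ Icc 0 ℓ ∧ q.2 ∈ Icc 0 ℓ ∧
        0 < om (deriv γ q.1) (deriv γ q.2)} = BSetup.SS ℓ γ := by
    ext q
    exact ⟨fun h => ⟨⟨h.1, h.2.1⟩, h.2.2⟩, fun h => ⟨h.1.1, h.1.2, h.2⟩⟩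
  rw [e]
  exact h
end

section
/- Let p: ℝ → ℝ be smooth, 2π-periodic and strictly positive, with p''(α) + p(α) > 0 for all α. For a > 0 and σ ∈ ℝ define α(ψ) := ∫₀^ψ dt/(a²cos²t + a⁻²sin²t) and p_{a,σ}(ψ) := p(α(ψ) + σ) · (a⁻²sin²ψ + a²cos²ψ)^{1/2}. Then there exists a pair (a,σ) with a > 0 and σ ∈ [0, π/2] such that ∫₀^{2π} p_{a,σ}(ψ) cos(2ψ) dψ = 0 and ∫₀^{2π} p_{a,σ}(ψ) sin(2ψ) dψ = 0. -/
open Real Set intervalIntegral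

/-- The reparametrization angle α(ψ) induced by the map (x,y) ↦ (ax, y/a). -/
noncomputable def alphaFun (a ψ : ℝ) : ℝ :=
  ∫ t in (0:ℝ)..ψ, 1 / (a ^ 2 * Real.cos t ^ 2 + (a ^ 2)⁻¹ * Real.sin t ^ 2)

/-- The support function of the image of the domain with support function p under
the rotation by σ followed by (x,y) ↦ (ax, y/a). -/
noncomputable def suppTrans (p : ℝ → ℝ) (a σ ψ : ℝ) : ℝ :=
  p (alphaFun a ψ + σ) *
    Real.sqrt ((a ^ 2)⁻¹ * Real.sin ψ ^ 2 + a ^ 2 * Real.cos ψ ^ 2)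

noncomputable def qq (t x : ℝ) : ℝ := exp (-(2 * t)) * cos x ^ 2 + exp (2 * t) * sin x ^ 2

lemma qq_pos (t x : ℝ) : 0 < qq t x := by
  unfold qq
  have h1 := exp_pos (-(2 * t))
  have h2 := exp_pos (2 * t)
  have h3 := sin_sq_add_cos_sq x
  rcases eq_or_ne (cos x) 0 with h | h
  · rw [h] at h3 ⊢
    have : sin x ^ 2 = 1 := by linarith
    rw [this]; simpa using h2
  · have : 0 < cos x ^ 2 := by positivity
    positivity

lemma qq_cont : Continuous (fun z : ℝ × ℝ => qq z.1 z.2) := by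
  unfold qq; fun_prop

lemma qq_cont_comp {X : Type*} [TopologicalSpace X] {f g : X → ℝ} (hf : Continuous f)
    (hg : Continuous g) (r : ℝ) : Continuous (fun z => qq (f z) (g z) ^ r) := by
  have := qq_cont.comp (hf.prodMk hg)
  exact this.rpow_const (fun z => Or.inl (qq_pos _ _).ne')

/-- differentiation under the integral sign -/
lemma deriv_int {F F' : ℝ → ℝ → ℝ} (a b : ℝ) (hF : Continuous (Function.uncurry F))
    (hF' : Continuous (Function.uncurry F'))
    (hd : ∀ t x, HasDerivAt (fun s => F s x) (F' t x) t) (t : ℝ) :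
    HasDerivAt (fun s => ∫ x in a..b, F s x) (∫ x in a..b, F' t x) t := by
  have hK : IsCompact (Icc (t - 1) (t + 1) ×ˢ uIcc a b) := isCompact_Icc.prod isCompact_uIcc
  obtain ⟨M, hM⟩ := hK.exists_bound_of_continuousOn (f := Function.uncurry F') hF'.continuousOn
  have hFs : ∀ s, Continuous (F s) := fun s => hF.comp (Continuous.prodMk_right s)
  have hFs' : ∀ s, Continuous (F' s) := fun s => hF'.comp (Continuous.prodMk_right s)
  refine (intervalIntegral.hasDerivAt_integral_of_dominated_loc_of_deriv_le
    (s := Icc (t - 1) (t + 1)) (bound := fun _ => M)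
    (Icc_mem_nhds (by linarith) (by linarith)) ?_ ?_ ?_ ?_ ?_ ?_).2
  · exact Filter.Eventually.of_forall fun s => (hFs s).aestronglyMeasurable
  · exact (hFs t).intervalIntegrable _ _
  · exact (hFs' t).aestronglyMeasurable
  · refine Filter.Eventually.of_forall fun x hx s hs => ?_
    exact hM (s, x) ⟨hs, uIoc_subset_uIcc hx⟩
  · simp
  · exact Filter.Eventually.of_forall fun x hx s hs => hd s x

noncomputable def LL (p : ℝ → ℝ) (t σ : ℝ) : ℝ :=
  ∫ x in (0:ℝ)..(2 * π), p x * qq t (x - σ) ^ (-(3/2) : ℝ)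

noncomputable def CC (p : ℝ → ℝ) (t σ : ℝ) : ℝ :=
  ∫ x in (0:ℝ)..(2 * π), p x *
    ((exp (-(2 * t)) * cos (x - σ) ^ 2 - exp (2 * t) * sin (x - σ) ^ 2) *
      qq t (x - σ) ^ (-(5/2) : ℝ))

noncomputable def SS (p : ℝ → ℝ) (t σ : ℝ) : ℝ :=
  ∫ x in (0:ℝ)..(2 * π), p x *
    (2 * sin (x - σ) * cos (x - σ) * qq t (x - σ) ^ (-(5/2) : ℝ))

lemma qq_dt (t x : ℝ) : HasDerivAt (fun s => qq s x)
    (-2 * (exp (-(2 * t)) * cos x ^ 2 - exp (2 * t) * sin x ^ 2)) t := by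
  unfold qq
  have h2 : HasDerivAt (fun s : ℝ => 2 * s) 2 t := by simpa using (hasDerivAt_id t).const_mul 2
  have := (h2.neg.exp.mul_const (cos x ^ 2)).add (h2.exp.mul_const (sin x ^ 2))
  refine HasDerivAt.congr_deriv this ?_
  simp; ring

lemma qq_dx (t x : ℝ) : HasDerivAt (fun y => qq t y)
    ((exp (2 * t) - exp (-(2 * t))) * (2 * sin x * cos x)) x := by
  unfold qq
  have := (((hasDerivAt_cos x).pow 2).const_mul (exp (-(2 * t)))).add
    (((hasDerivAt_sin x).pow 2).const_mul (exp (2 * t)))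
  refine HasDerivAt.congr_deriv this ?_
  simp; ring

lemma LL_dt (p : ℝ → ℝ) (hp : Continuous p) (t σ : ℝ) :
    HasDerivAt (fun s => LL p s σ) (3 * CC p t σ) t := by
  have := deriv_int (F := fun s x => p x * qq s (x - σ) ^ (-(3/2) : ℝ))
    (F' := fun s x => 3 * (p x *
    ((exp (-(2 * s)) * cos (x - σ) ^ 2 - exp (2 * s) * sin (x - σ) ^ 2) *
      qq s (x - σ) ^ (-(5/2) : ℝ)))) 0 (2 * π) ?_ ?_ ?_ t
  · unfold LL CC
    rw [intervalIntegral.integral_const_mul] at this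
    exact this
  · have := qq_cont_comp (X := ℝ × ℝ) continuous_fst (continuous_snd.sub (continuous_const (y := σ))) (-(3/2))
    exact (hp.comp continuous_snd).mul this
  · have := qq_cont_comp (X := ℝ × ℝ) continuous_fst (continuous_snd.sub (continuous_const (y := σ))) (-(5/2))
    simp only [Function.uncurry_def]
    fun_prop
  · intro s x
    have := ((qq_dt s (x - σ)).rpow_const (p := -(3/2)) (Or.inl (qq_pos _ _).ne')).const_mul (p x)
    refine HasDerivAt.congr_deriv this ?_
    norm_num
    ring

lemma LL_ds (p : ℝ → ℝ) (hp : Continuous p) (t σ : ℝ) :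
    HasDerivAt (fun s => LL p t s) (3 / 2 * (exp (2 * t) - exp (-(2 * t))) * SS p t σ) σ := by
  have := deriv_int (F := fun s x => p x * qq t (x - s) ^ (-(3/2) : ℝ))
    (F' := fun s x => (3 / 2 * (exp (2 * t) - exp (-(2 * t)))) * (p x *
    (2 * sin (x - s) * cos (x - s) * qq t (x - s) ^ (-(5/2) : ℝ)))) 0 (2 * π) ?_ ?_ ?_ σ
  · unfold LL SS
    rw [intervalIntegral.integral_const_mul] at this
    exact this
  · have := qq_cont_comp (X := ℝ × ℝ) (continuous_const (y := t))
      (continuous_snd.sub continuous_fst) (-(3/2))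
    exact (hp.comp continuous_snd).mul this
  · have := qq_cont_comp (X := ℝ × ℝ) (continuous_const (y := t))
      (continuous_snd.sub continuous_fst) (-(5/2))
    simp only [Function.uncurry_def]
    fun_prop
  · intro s x
    have h1 : HasDerivAt (fun s : ℝ => x - s) (-1) s := by
      simpa using (hasDerivAt_id s).const_sub x
    have := (((qq_dx t (x - s)).comp s h1).rpow_const (p := -(3/2))
      (Or.inl (qq_pos _ _).ne')).const_mul (p x)
    refine HasDerivAt.congr_deriv this ?_
    simp only [Function.comp]
    norm_num
    ring

lemma LL_cont (p : ℝ → ℝ) (hp : Continuous p) : Continuous (fun z : ℝ × ℝ => LL p z.1 z.2) := by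
  unfold LL
  apply intervalIntegral.continuous_parametric_intervalIntegral_of_continuous'
  have := qq_cont_comp (X := (ℝ × ℝ) × ℝ) (f := fun z => z.1.1) (g := fun z => z.2 - z.1.2)
    (by fun_prop) (by fun_prop) (-(3/2))
  exact (hp.comp continuous_snd).mul this

/-- shift -/
lemma shift_int (p g : ℝ → ℝ) (hper : ∀ α, p (α + 2 * π) = p α) (hg : ∀ α, g (α + 2 * π) = g α)
    (σ : ℝ) : ∫ x in (0:ℝ)..(2 * π), p x * g (x - σ) = ∫ x in (0:ℝ)..(2 * π), p (x + σ) * g x := by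
  have h1 := intervalIntegral.integral_comp_add_right (a := 0) (b := 2 * π)
    (fun x => p x * g (x - σ)) σ
  simp only [add_sub_cancel_right] at h1
  rw [h1]
  have hP : Function.Periodic (fun x => p x * g (x - σ)) (2 * π) := by
    intro x
    simp only [hper]
    rw [← hg (x - σ)]; ring_nf
  have := hP.intervalIntegral_add_eq 0 (0 + σ)
  rw [zero_add] at this
  rw [this]; congr 1; ring

lemma qq_swap_add (t x : ℝ) : qq (-t) x = qq t (x + π / 2) := by
  unfold qq; rw [cos_add_pi_div_two, sin_add_pi_div_two]; ring_nf

lemma CC_swap (p : ℝ → ℝ) (t σ : ℝ) : CC p (-t) (σ + π / 2) = - CC p t σ := by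
  unfold CC
  rw [← intervalIntegral.integral_neg]
  congr 1; ext x
  rw [qq_swap_add, show x - (σ + π / 2) + π / 2 = x - σ by ring,
    show x - (σ + π / 2) = x - σ - π / 2 by ring, cos_sub_pi_div_two, sin_sub_pi_div_two]
  ring_nf

lemma SS_swap (p : ℝ → ℝ) (t σ : ℝ) : SS p (-t) (σ + π / 2) = - SS p t σ := by
  unfold SS
  rw [← intervalIntegral.integral_neg]
  congr 1; ext x
  rw [qq_swap_add, show x - (σ + π / 2) + π / 2 = x - σ by ring,
    show x - (σ + π / 2) = x - σ - π / 2 by ring, cos_sub_pi_div_two, sin_sub_pi_div_two]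
  ring_nf

/-- R = r^2 -/
noncomputable def rr (t x : ℝ) : ℝ := exp (2 * t) * cos x ^ 2 + exp (-(2 * t)) * sin x ^ 2

lemma rr_eq (t x : ℝ) : rr t x = qq (-t) x := by unfold rr qq; ring_nf

lemma rr_pos (t x : ℝ) : 0 < rr t x := by rw [rr_eq]; exact qq_pos _ _

noncomputable def mm (t x : ℝ) : ℝ := exp t * cos x ^ 2 + exp (-t) * sin x ^ 2
noncomputable def nn (t x : ℝ) : ℝ := cos x * sin x * (exp (-t) - exp t)

lemma mm_pos (t x : ℝ) : 0 < mm t x := by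
  have := rr_pos (t / 2) x
  unfold rr at this; unfold mm
  convert this using 4 <;> ring_nf

lemma e2 (t : ℝ) : exp (2 * t) = exp t ^ 2 := by rw [two_mul, exp_add]; ring
lemma e2n (t : ℝ) : exp (-(2 * t)) = exp (-t) ^ 2 := by rw [← e2]; ring_nf
lemma een (t : ℝ) : exp t * exp (-t) = 1 := by rw [← exp_add]; simp

lemma mn (t x : ℝ) : mm t x ^ 2 + nn t x ^ 2 = rr t x := by
  unfold mm nn rr
  rw [e2, e2n]
  have h3 : sin x ^ 2 = 1 - cos x ^ 2 := by linarith [sin_sq_add_cos_sq x]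
  simp only [mul_pow, h3]
  ring

lemma alpha_deriv (t x : ℝ) :
    HasDerivAt (fun y => y + arctan (nn t y / mm t y)) (1 / rr t x) x := by
  have hm : HasDerivAt (mm t) (2 * nn t x) x := by
    unfold mm nn
    have := (((hasDerivAt_cos x).pow 2).const_mul (exp t)).add
      (((hasDerivAt_sin x).pow 2).const_mul (exp (-t)))
    refine HasDerivAt.congr_deriv this ?_
    simp; ring
  have hn : HasDerivAt (nn t) ((cos x ^ 2 - sin x ^ 2) * (exp (-t) - exp t)) x := by
    unfold nn
    have := ((hasDerivAt_cos x).mul (hasDerivAt_sin x)).mul_const (exp (-t) - exp t)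
    refine HasDerivAt.congr_deriv this ?_
    ring
  have h0 := mm_pos t x
  have hr := rr_pos t x
  have := (hasDerivAt_id x).add ((hn.div hm h0.ne').arctan)
  refine HasDerivAt.congr_deriv this ?_
  have h1 : 1 + (nn t x / mm t x) ^ 2 = rr t x / mm t x ^ 2 := by
    rw [← mn]; field_simp
  simp only [Pi.div_apply]
  rw [h1]
  field_simp
  rw [← mn]
  unfold mm nn
  have h3 : sin x ^ 2 = 1 - cos x ^ 2 := by linarith [sin_sq_add_cos_sq x]
  have h4 := een t
  simp only [mul_pow, h3]
  generalize exp t = A at *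
  generalize exp (-t) = B at *
  generalize cos x ^ 2 = c at *
  linear_combination h4

lemma rr_cont (t : ℝ) : Continuous (rr t) := by unfold rr; fun_prop

lemma inv_rr_cont (t : ℝ) : Continuous (fun x => 1 / rr t x) :=
  continuous_const.div (rr_cont t) (fun x => (rr_pos t x).ne')

lemma alpha_eq (t ψ : ℝ) : alphaFun (exp t) ψ = ψ + arctan (nn t ψ / mm t ψ) := by
  have h := intervalIntegral.integral_eq_sub_of_hasDerivAt (a := 0) (b := ψ)
    (fun x _ => alpha_deriv t x) ((inv_rr_cont t).intervalIntegrable _ _)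
  have h0 : nn t 0 = 0 := by simp [nn]
  rw [h0] at h
  simp only [zero_div, arctan_zero, add_zero, sub_zero] at h
  rw [← h]
  unfold alphaFun rr
  simp only [← e2, exp_neg]

lemma alpha_hd (t x : ℝ) : HasDerivAt (alphaFun (exp t)) (1 / rr t x) x := by
  have : alphaFun (exp t) = fun y => y + arctan (nn t y / mm t y) := funext (alpha_eq t)
  rw [this]; exact alpha_deriv t x

lemma sqrt_mn (t x : ℝ) : √(1 + (nn t x / mm t x) ^ 2) = √(rr t x) / mm t x := by
  have h0 := mm_pos t x
  have h1 : 1 + (nn t x / mm t x) ^ 2 = rr t x / mm t x ^ 2 := by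
    rw [← mn]; field_simp
  rw [h1, sqrt_div (rr_pos t x).le, sqrt_sq h0.le]

lemma cos_alpha (t x : ℝ) : cos (alphaFun (exp t) x) = exp t * cos x / √(rr t x) := by
  have h0 := mm_pos t x
  have hr := sqrt_pos.2 (rr_pos t x)
  rw [alpha_eq, cos_add, cos_arctan, sin_arctan, sqrt_mn]
  field_simp
  unfold mm nn
  linear_combination cos x * exp t * sin_sq_add_cos_sq x

lemma sin_alpha (t x : ℝ) : sin (alphaFun (exp t) x) = exp (-t) * sin x / √(rr t x) := by
  have h0 := mm_pos t x
  have hr := sqrt_pos.2 (rr_pos t x)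
  rw [alpha_eq, sin_add, cos_arctan, sin_arctan, sqrt_mn]
  field_simp
  unfold mm nn
  linear_combination sin x * exp (-t) * sin_sq_add_cos_sq x

lemma qc (t x : ℝ) : exp (-(2 * t)) * cos (alphaFun (exp t) x) ^ 2 = cos x ^ 2 / rr t x := by
  rw [cos_alpha, div_pow, sq_sqrt (rr_pos t x).le, e2n, mul_pow]
  have := een t
  rw [← mul_div_assoc, ← mul_assoc, ← mul_pow, mul_comm (exp (-t)), this]; ring

lemma qs (t x : ℝ) : exp (2 * t) * sin (alphaFun (exp t) x) ^ 2 = sin x ^ 2 / rr t x := by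
  rw [sin_alpha, div_pow, sq_sqrt (rr_pos t x).le, e2, mul_pow]
  have := een t
  rw [← mul_div_assoc, ← mul_assoc, ← mul_pow, this]; ring

lemma qsc (t x : ℝ) : sin (alphaFun (exp t) x) * cos (alphaFun (exp t) x)
    = sin x * cos x / rr t x := by
  have hr := sqrt_pos.2 (rr_pos t x)
  rw [sin_alpha, cos_alpha, div_mul_div_comm, mul_self_sqrt (rr_pos t x).le]
  congr 1
  linear_combination sin x * cos x * een t

lemma qq_alpha (t x : ℝ) : qq t (alphaFun (exp t) x) = (rr t x)⁻¹ := by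
  unfold qq
  rw [qc, qs, ← add_div, add_comm, sin_sq_add_cos_sq, one_div]

lemma chg (t : ℝ) (f : ℝ → ℝ) (hf : Continuous f) :
    ∫ x in (0:ℝ)..(2 * π), f (alphaFun (exp t) x) * (1 / rr t x) =
      ∫ x in (0:ℝ)..(2 * π), f x := by
  have := intervalIntegral.integral_comp_mul_deriv (a := 0) (b := 2 * π)
    (f := alphaFun (exp t)) (f' := fun x => 1 / rr t x) (g := f) (fun x _ => alpha_hd t x)
    (inv_rr_cont t).continuousOn hf
  simp only [Function.comp] at this
  rw [this, alpha_eq, alpha_eq]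
  simp [nn]

lemma pow52 {R : ℝ} (hR : 0 < R) : (R⁻¹) ^ (-(5/2) : ℝ) = R ^ 2 * √R := by
  rw [rpow_neg (by positivity), inv_rpow hR.le, inv_inv, sqrt_eq_rpow, ← rpow_natCast,
    ← rpow_add hR]
  norm_num

lemma pow32 {R : ℝ} (hR : 0 < R) : (R⁻¹) ^ (-(3/2) : ℝ) = R * √R := by
  rw [rpow_neg (by positivity), inv_rpow hR.le, inv_inv, sqrt_eq_rpow]
  nth_rewrite 2 [← rpow_one R]
  rw [← rpow_add hR]
  norm_num

lemma supp_eq (p : ℝ → ℝ) (t σ ψ : ℝ) :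
    suppTrans p (exp t) σ ψ = p (alphaFun (exp t) ψ + σ) * √(rr t ψ) := by
  unfold suppTrans rr
  rw [← e2, exp_neg, add_comm (exp (2 * t) * _)]

lemma qq_per (t x : ℝ) : qq t (x + 2 * π) = qq t x := by
  unfold qq; rw [cos_add_two_pi, sin_add_two_pi]

lemma CC_eq (p : ℝ → ℝ) (hp : Continuous p) (hper : ∀ α, p (α + 2 * π) = p α) (t σ : ℝ) :
    ∫ ψ in (0:ℝ)..(2 * π), suppTrans p (exp t) σ ψ * cos (2 * ψ) = CC p t σ := by
  have h1 := shift_int p (fun x => (exp (-(2 * t)) * cos x ^ 2 - exp (2 * t) * sin x ^ 2) *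
      qq t x ^ (-(5/2) : ℝ)) hper (by intro x; simp only [qq_per, cos_add_two_pi, sin_add_two_pi]) σ
  unfold CC
  rw [h1]
  refine Eq.trans ?_ (chg t _ ?_)
  · congr 1; ext x
    have hr := rr_pos t x
    rw [supp_eq, qc, qs, qq_alpha, pow52 hr, cos_two_mul']
    field_simp
  · have := qq_cont_comp (X := ℝ) (continuous_const (y := t)) continuous_id (-(5/2))
    simp only [id] at this
    fun_prop

lemma SS_eq (p : ℝ → ℝ) (hp : Continuous p) (hper : ∀ α, p (α + 2 * π) = p α) (t σ : ℝ) :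
    ∫ ψ in (0:ℝ)..(2 * π), suppTrans p (exp t) σ ψ * sin (2 * ψ) = SS p t σ := by
  have h1 := shift_int p (fun x => 2 * sin x * cos x *
      qq t x ^ (-(5/2) : ℝ)) hper (by intro x; simp only [qq_per, cos_add_two_pi, sin_add_two_pi]) σ
  unfold SS
  rw [h1]
  refine Eq.trans ?_ (chg t _ ?_)
  · congr 1; ext x
    have hr := rr_pos t x
    rw [supp_eq, mul_assoc 2 (sin _) (cos _), qsc, qq_alpha, pow52 hr, sin_two_mul]
    field_simp
  · have := qq_cont_comp (X := ℝ) (continuous_const (y := t)) continuous_id (-(5/2))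
    simp only [id] at this
    fun_prop

lemma LL_eq (p : ℝ → ℝ) (hp : Continuous p) (hper : ∀ α, p (α + 2 * π) = p α) (t σ : ℝ) :
    ∫ ψ in (0:ℝ)..(2 * π), p (alphaFun (exp t) ψ + σ) * √(rr t ψ) = LL p t σ := by
  have h1 := shift_int p (fun x => qq t x ^ (-(3/2) : ℝ)) hper
    (by intro x; simp only [qq_per]) σ
  unfold LL
  rw [h1]
  refine Eq.trans ?_ (chg t _ ?_)
  · congr 1; ext x
    have hr := rr_pos t x
    rw [qq_alpha, pow32 hr]
    field_simp
  · have := qq_cont_comp (X := ℝ) (continuous_const (y := t)) continuous_id (-(3/2))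
    simp only [id] at this
    fun_prop

lemma sqrt_rr_ge (t x : ℝ) : exp t * cos x ^ 2 ≤ √(rr t x) ∧ exp (-t) * sin x ^ 2 ≤ √(rr t x) := by
  have hc := cos_sq_le_one x
  have hs := sin_sq_le_one x
  have hc0 := sq_nonneg (cos x)
  have hs0 := sq_nonneg (sin x)
  constructor
  · apply le_sqrt_of_sq_le
    unfold rr
    rw [e2, e2n, mul_pow]
    have : exp t ^ 2 * (cos x ^ 2) ^ 2 ≤ exp t ^ 2 * cos x ^ 2 := by
      apply mul_le_mul_of_nonneg_left _ (by positivity); nlinarith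
    have : 0 ≤ exp (-t) ^ 2 * sin x ^ 2 := by positivity
    linarith
  · apply le_sqrt_of_sq_le
    unfold rr
    rw [e2, e2n, mul_pow]
    have : exp (-t) ^ 2 * (sin x ^ 2) ^ 2 ≤ exp (-t) ^ 2 * sin x ^ 2 := by
      apply mul_le_mul_of_nonneg_left _ (by positivity); nlinarith
    have : 0 ≤ exp t ^ 2 * cos x ^ 2 := by positivity
    linarith

lemma LL_bound (p : ℝ → ℝ) (hp : Continuous p) (hper : ∀ α, p (α + 2 * π) = p α) (m : ℝ)
    (hm0 : 0 < m) (hm : ∀ x, m ≤ p x) (t σ : ℝ) : m * π * exp |t| ≤ LL p t σ := by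
  rw [← LL_eq p hp hper]
  have hac : Continuous (alphaFun (exp t)) :=
    continuous_iff_continuousAt.2 fun x => (alpha_hd t x).continuousAt
  have hI : Continuous (fun ψ => p (alphaFun (exp t) ψ + σ) * √(rr t ψ)) := by
    have := rr_cont t
    fun_prop
  have hpi := pi_pos
  rcases abs_cases t with ⟨h, _⟩ | ⟨h, _⟩ <;> rw [h]
  · have : m * π * exp t = ∫ x in (0:ℝ)..(2 * π), m * (exp t * cos x ^ 2) := by
      rw [intervalIntegral.integral_const_mul, intervalIntegral.integral_const_mul,
        integral_cos_sq]
      simp; ring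
    rw [this]
    apply intervalIntegral.integral_mono_on (by positivity)
      (Continuous.intervalIntegrable (by fun_prop) _ _) (hI.intervalIntegrable _ _)
    intro x _
    exact mul_le_mul (hm _) (sqrt_rr_ge t x).1 (by positivity) (hm0.le.trans (hm _))
  · have : m * π * exp (-t) = ∫ x in (0:ℝ)..(2 * π), m * (exp (-t) * sin x ^ 2) := by
      rw [intervalIntegral.integral_const_mul, intervalIntegral.integral_const_mul,
        integral_sin_sq]
      simp; ring
    rw [this]
    apply intervalIntegral.integral_mono_on (by positivity)
      (Continuous.intervalIntegrable (by fun_prop) _ _) (hI.intervalIntegrable _ _)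
    intro x _
    exact mul_le_mul (hm _) (sqrt_rr_ge t x).2 (by positivity) (hm0.le.trans (hm _))

lemma LL_min (p : ℝ → ℝ) (hp : Continuous p) (hper : ∀ α, p (α + 2 * π) = p α)
    (hpos : ∀ α, 0 < p α) : ∃ t σ, ∀ t' σ', LL p t σ ≤ LL p t' σ' := by
  have hpi := pi_pos
  have hP : Function.Periodic p (2 * π) := hper
  obtain ⟨x0, -, hx0⟩ := isCompact_Icc.exists_isMinOn (s := Icc 0 (2 * π))
    ⟨0, by simp [hpi.le]⟩ hp.continuousOn
  have hm : ∀ x, p x0 ≤ p x := by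
    intro x
    obtain ⟨y, hy, hxy⟩ := hP.exists_mem_Ico₀ (by positivity) x
    rw [hxy]; exact hx0 (Ico_subset_Icc_self hy)
  have hm0 := hpos x0
  have hLper : ∀ t, Function.Periodic (LL p t) (2 * π) := by
    intro t σ
    unfold LL
    congr 1; ext x
    rw [← qq_per t (x - (σ + 2 * π))]; ring_nf
  set T := LL p 0 0 / (p x0 * π) with hT
  have hL0 : 0 < LL p 0 0 := lt_of_lt_of_le (by positivity) (LL_bound p hp hper _ hm0 hm 0 0)
  have hT0 : 0 < T := by positivity
  obtain ⟨⟨t, σ⟩, -, hmin⟩ := (isCompact_Icc.prod isCompact_Icc).exists_isMinOn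
    (s := Icc (-T) T ×ˢ Icc 0 (2 * π)) ⟨(0, 0), by simp [hpi.le, hT0.le]⟩ (LL_cont p hp).continuousOn
  refine ⟨t, σ, fun t' σ' => ?_⟩
  obtain ⟨y, hy, hxy⟩ := (hLper t').exists_mem_Ico₀ (by positivity) σ'
  rw [hxy]
  by_cases ht : |t'| ≤ T
  · exact hmin (show (t', y) ∈ _ from ⟨abs_le.1 ht, Ico_subset_Icc_self hy⟩)
  · have h1 : LL p t σ ≤ LL p 0 0 :=
      hmin (show ((0:ℝ), (0:ℝ)) ∈ _ by simp [hpi.le, hT0.le])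
    have h2 := LL_bound p hp hper _ hm0 hm t' y
    have h3 : T ≤ exp |t'| := by linarith [add_one_le_exp |t'|]
    have h4 : LL p 0 0 = p x0 * π * T := by rw [hT]; field_simp
    have h5 : p x0 * π * T ≤ p x0 * π * exp |t'| := by gcongr
    linarith

lemma exists_zero (p : ℝ → ℝ) (hp : Continuous p) (hper : ∀ α, p (α + 2 * π) = p α)
    (hpos : ∀ α, 0 < p α) : ∃ t σ, CC p t σ = 0 ∧ SS p t σ = 0 := by
  obtain ⟨t, σ, hmin⟩ := LL_min p hp hper hpos
  have hC : ∀ σ', LL p t σ' = LL p t σ → CC p t σ' = 0 := by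
    intro σ' h
    have : IsLocalMin (fun s => LL p s σ') t :=
      Filter.Eventually.of_forall fun s => by simpa only [h] using hmin s σ'
    have := this.hasDerivAt_eq_zero (LL_dt p hp t σ')
    linarith
  by_cases ht : t = 0
  · subst ht
    have hq : ∀ x, qq 0 x = 1 := by intro x; simp [qq]
    have hL : ∀ σ', LL p 0 σ' = LL p 0 σ := by intro σ'; simp [LL, hq]
    refine ⟨0, 0, hC 0 (hL 0), ?_⟩
    refine Eq.trans ?_ (hC (π / 4) (hL _))
    unfold SS CC
    congr 1; ext x
    simp only [hq, one_rpow, mul_one, mul_zero, neg_zero, exp_zero, one_mul, sub_zero]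
    rw [← cos_two_mul', ← sin_two_mul, show 2 * (x - π / 4) = 2 * x - π / 2 by ring,
      cos_sub_pi_div_two]
  · refine ⟨t, σ, hC σ rfl, ?_⟩
    have : IsLocalMin (fun s => LL p t s) σ := Filter.Eventually.of_forall fun s => hmin t s
    have := this.hasDerivAt_eq_zero (LL_ds p hp t σ)
    have hne : exp (2 * t) - exp (-(2 * t)) ≠ 0 := by
      intro h
      have := exp_injective (sub_eq_zero.1 h)
      exact ht (by linarith)
    simpa [hne] using this

/-- There is an affine normalization killing the second Fourier coefficients of the
support function. -/
theorem exists_affine_normalization_vanishing_second_Fourier_terms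
    (p : ℝ → ℝ) (hp : ContDiff ℝ (⊤ : ℕ∞) p) (hper : ∀ α, p (α + 2 * π) = p α)
    (hpos : ∀ α, 0 < p α)
    (hcurv : ∀ α, 0 < deriv (deriv p) α + p α) :
    ∃ a σ : ℝ, 0 < a ∧ σ ∈ Icc 0 (π / 2) ∧
      (∫ ψ in (0:ℝ)..(2 * π), suppTrans p a σ ψ * Real.cos (2 * ψ)) = 0 ∧
      (∫ ψ in (0:ℝ)..(2 * π), suppTrans p a σ ψ * Real.sin (2 * ψ)) = 0 := by
  have hpc := hp.continuous
  obtain ⟨t, σ, h1, h2⟩ := exists_zero p hpc hper hpos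
  have hP : Function.Periodic (fun σ => ∃ t, CC p t σ = 0 ∧ SS p t σ = 0) (π / 2) := by
    intro σ
    apply propext
    constructor
    · rintro ⟨t, h1, h2⟩
      refine ⟨-t, ?_, ?_⟩
      · have := CC_swap p (-t) σ
        rw [neg_neg, h1] at this; linarith
      · have := SS_swap p (-t) σ
        rw [neg_neg, h2] at this; linarith
    · rintro ⟨t, h1, h2⟩
      exact ⟨-t, by rw [CC_swap, h1, neg_zero], by rw [SS_swap, h2, neg_zero]⟩
  obtain ⟨y, hy, hxy⟩ := hP.exists_mem_Ico₀ (by positivity) σ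
  obtain ⟨s, h3, h4⟩ := hxy.mp ⟨t, h1, h2⟩
  refine ⟨exp s, y, exp_pos s, Ico_subset_Icc_self hy, ?_, ?_⟩
  · rw [CC_eq p hpc hper, h3]
  · rw [SS_eq p hpc hper, h4]
end
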